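/- arXiv:1201.3039 — 4 statements merged into one kernel-verified Lean document; each statement's English description precedes it below -/
import Mathlib

section
/- Let x₁, …, xₙ ∈ R and let Y be a chain complex of R-modules with H_i(Y) = 0 for all i < i₀. Then H_i(K^R(x₁,…,xₙ) ⊗_R Y) = 0 for all i < i₀, and H_{i₀}(K^R(x₁,…,xₙ) ⊗_R Y) ≅ H_{i₀}(Y)/(x₁,…,xₙ)H_{i₀}(Y). -/
open CategoryTheory CategoryTheory.Limits MonoidalCategory

noncomputable section

variable (R : Type) [CommRing R]

/- Instances making `CochainComplex (ModuleCat R) ℤ` into a monoidal category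
(the tensor product of complexes). -/

instance (X : ModuleCat R) : PreservesColimits (tensorRight X) :=
  preservesColimits_of_natIso
    (F := tensorLeft X) (NatIso.ofComponents (fun Y => β_ X Y) (by intros; simp))

instance : (curriedTensor (ModuleCat R)).Additive where
  map_add := by intros; ext Z : 2; simp [curriedTensor, MonoidalPreadditive.add_whiskerRight]

instance (X : ModuleCat R) : ((curriedTensor (ModuleCat R)).obj X).Additive :=
  inferInstanceAs (tensorLeft X).Additive

instance (X : ModuleCat R) :
    PreservesColimit (Functor.empty.{0} (ModuleCat R)) ((curriedTensor (ModuleCat R)).obj X) :=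
  inferInstanceAs (PreservesColimit _ (tensorLeft X))

instance (X : ModuleCat R) :
    PreservesColimit (Functor.empty.{0} (ModuleCat R))
      ((curriedTensor (ModuleCat R)).flip.obj X) :=
  inferInstanceAs (PreservesColimit _ (tensorRight X))

instance (X₁ X₂ X₃ : GradedObject ℤ (ModuleCat R)) :
    GradedObject.HasGoodTensor₁₂Tensor X₁ X₂ X₃ :=
  fun _ i₃ => inferInstanceAs (PreservesColimit _ (tensorRight (X₃ i₃)))

instance (X₁ X₂ X₃ : GradedObject ℤ (ModuleCat R)) :
    GradedObject.HasGoodTensorTensor₂₃ X₁ X₂ X₃ :=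
  fun i₁ _ => inferInstanceAs (PreservesColimit _ (tensorLeft (X₁ i₁)))

instance (X₁ X₂ X₃ X₄ : GradedObject ℤ (ModuleCat R)) :
    GradedObject.HasTensor₄ObjExt X₁ X₂ X₃ X₄ :=
  fun i₁ _ => inferInstanceAs (PreservesColimit _ (tensorLeft (X₁ i₁)))

/-- The Koszul complex `K^R(x)` on a single element: the mapping cone of multiplication by
`x` on the unit complex (`R` concentrated in degree `0`); it has `R` in (chain) degrees `0`
and `1`. -/
def koszulOne (x : R) : CochainComplex (ModuleCat R) ℤ :=
  CochainComplex.mappingCone (x • 𝟙 (𝟙_ (CochainComplex (ModuleCat R) ℤ)))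

/-- The Koszul complex `K^R(x₁, …, xₙ)` on a sequence (here a list) of elements of `R`,
defined inductively as a tensor product of the Koszul complexes of the individual elements,
`K^R(x₁,…,xₙ) = K^R(x₁,…,x_{n-1}) ⊗ K^R(xₙ)`. -/
def koszul : List R → CochainComplex (ModuleCat R) ℤ
  | [] => 𝟙_ _
  | x :: xs => koszul xs ⊗ koszulOne R x

namespace CochainComplex

variable {R}

/-- The degree `n` part of the map `K ⊗ Y ⟶ L ⊗ Y` induced by a family of maps `K.X p ⟶ L.X p`,
which need not commute with the differentials. -/
def tensorDegreewiseMap {K L : CochainComplex (ModuleCat R) ℤ} (φ : ∀ p, K.X p ⟶ L.X p)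
    (Y : CochainComplex (ModuleCat R) ℤ) (n : ℤ) : (K ⊗ Y).X n ⟶ (L ⊗ Y).X n :=
  HomologicalComplex.mapBifunctorDesc (K₁ := K) (K₂ := Y) (F := curriedTensor (ModuleCat R))
    (c := ComplexShape.up ℤ) fun p q h =>
      φ p ▷ Y.X q ≫ HomologicalComplex.ιTensorObj L Y p q n h

lemma ι_tensorDegreewiseMap {K L : CochainComplex (ModuleCat R) ℤ} (φ : ∀ p, K.X p ⟶ L.X p)
    (Y : CochainComplex (ModuleCat R) ℤ) (n p q : ℤ) (h : p + q = n) :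
    HomologicalComplex.ιTensorObj K Y p q n h ≫ tensorDegreewiseMap φ Y n =
      φ p ▷ Y.X q ≫ HomologicalComplex.ιTensorObj L Y p q n h :=
  HomologicalComplex.ι_mapBifunctorDesc _ _ _ _

lemma tensorObj_hom_ext {K Y : CochainComplex (ModuleCat R) ℤ} {n : ℤ} {A : ModuleCat R}
    {f g : (K ⊗ Y).X n ⟶ A}
    (h : ∀ (p q : ℤ) (h : p + q = n), HomologicalComplex.ιTensorObj K Y p q n h ≫ f =
      HomologicalComplex.ιTensorObj K Y p q n h ≫ g) : f = g :=
  HomologicalComplex.mapBifunctor.hom_ext h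

lemma whiskerRight_f {K L : CochainComplex (ModuleCat R) ℤ} (f : K ⟶ L)
    (Y : CochainComplex (ModuleCat R) ℤ) (n : ℤ) :
    (f ▷ Y).f n = tensorDegreewiseMap f.f Y n := by
  refine tensorObj_hom_ext fun p q h => ?_
  rw [ι_tensorDegreewiseMap]
  refine (HomologicalComplex.ι_mapBifunctorMap f (𝟙 Y) (curriedTensor _) _ p q n h).trans ?_
  rw [HomologicalComplex.id_f, CategoryTheory.Functor.map_id, Category.id_comp]
  rfl

lemma tensorDegreewiseMap_id (K Y : CochainComplex (ModuleCat R) ℤ) (n : ℤ) :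
    tensorDegreewiseMap (fun p => 𝟙 (K.X p)) Y n = 𝟙 _ := by
  refine tensorObj_hom_ext fun p q h => ?_
  rw [ι_tensorDegreewiseMap, id_whiskerRight, Category.id_comp]
  exact (Category.comp_id _).symm

lemma tensorDegreewiseMap_comp {K L M : CochainComplex (ModuleCat R) ℤ}
    (φ : ∀ p, K.X p ⟶ L.X p) (ψ : ∀ p, L.X p ⟶ M.X p)
    (Y : CochainComplex (ModuleCat R) ℤ) (n : ℤ) :
    tensorDegreewiseMap (fun p => φ p ≫ ψ p) Y n =
      tensorDegreewiseMap φ Y n ≫ tensorDegreewiseMap ψ Y n := by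
  refine tensorObj_hom_ext fun p q h => ?_
  rw [ι_tensorDegreewiseMap, ← Category.assoc, ι_tensorDegreewiseMap, Category.assoc,
    ι_tensorDegreewiseMap, comp_whiskerRight, Category.assoc]

lemma tensorDegreewiseMap_add {K L : CochainComplex (ModuleCat R) ℤ}
    (φ ψ : ∀ p, K.X p ⟶ L.X p) (Y : CochainComplex (ModuleCat R) ℤ) (n : ℤ) :
    tensorDegreewiseMap (fun p => φ p + ψ p) Y n =
      tensorDegreewiseMap φ Y n + tensorDegreewiseMap ψ Y n := by
  refine tensorObj_hom_ext fun p q h => ?_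
  rw [ι_tensorDegreewiseMap, MonoidalPreadditive.add_whiskerRight, Preadditive.add_comp,
    Preadditive.comp_add, ι_tensorDegreewiseMap, ι_tensorDegreewiseMap]

lemma tensorDegreewiseMap_smul {K L : CochainComplex (ModuleCat R) ℤ} (r : R)
    (φ : ∀ p, K.X p ⟶ L.X p) (Y : CochainComplex (ModuleCat R) ℤ) (n : ℤ) :
    tensorDegreewiseMap (fun p => r • φ p) Y n = r • tensorDegreewiseMap φ Y n := by
  refine tensorObj_hom_ext fun p q h => ?_
  rw [ι_tensorDegreewiseMap, MonoidalLinear.smul_whiskerRight, Linear.smul_comp,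
    Linear.comp_smul, ι_tensorDegreewiseMap]

lemma smul_whiskerRight {K L : CochainComplex (ModuleCat R) ℤ} (r : R) (f : K ⟶ L)
    (Y : CochainComplex (ModuleCat R) ℤ) : (r • f) ▷ Y = r • (f ▷ Y) := by
  ext1 n
  rw [HomologicalComplex.smul_f_apply, whiskerRight_f, whiskerRight_f, ← tensorDegreewiseMap_smul]
  rfl

lemma zero_whiskerRight (K L Y : CochainComplex (ModuleCat R) ℤ) :
    (0 : K ⟶ L) ▷ Y = 0 := by
  simpa using smul_whiskerRight (0 : R) (0 : K ⟶ L) Y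

/-- The short complex obtained from `S` by applying `- ⊗ Y`. -/
@[simps]
def tensorRightShortComplex (S : ShortComplex (CochainComplex (ModuleCat R) ℤ))
    (Y : CochainComplex (ModuleCat R) ℤ) : ShortComplex (CochainComplex (ModuleCat R) ℤ) where
  f := S.f ▷ Y
  g := S.g ▷ Y
  zero := by rw [← comp_whiskerRight, S.zero, zero_whiskerRight]

lemma tensorRightShortComplex_shortExact {S : ShortComplex (CochainComplex (ModuleCat R) ℤ)}
    (r : ∀ n, S.X₂.X n ⟶ S.X₁.X n) (s : ∀ n, S.X₃.X n ⟶ S.X₂.X n)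
    (f_r : ∀ n, S.f.f n ≫ r n = 𝟙 _) (s_g : ∀ n, s n ≫ S.g.f n = 𝟙 _)
    (id : ∀ n, r n ≫ S.f.f n + S.g.f n ≫ s n = 𝟙 _)
    (Y : CochainComplex (ModuleCat R) ℤ) : (tensorRightShortComplex S Y).ShortExact := by
  refine HomologicalComplex.shortExact_of_degreewise_shortExact _ fun n => ?_
  have f_r' : (S.f ▷ Y).f n ≫ tensorDegreewiseMap r Y n = 𝟙 _ := by
    rw [whiskerRight_f, ← tensorDegreewiseMap_comp, funext f_r, tensorDegreewiseMap_id]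
  have s_g' : tensorDegreewiseMap s Y n ≫ (S.g ▷ Y).f n = 𝟙 _ := by
    rw [whiskerRight_f, ← tensorDegreewiseMap_comp, funext s_g, tensorDegreewiseMap_id]
  have id' : tensorDegreewiseMap r Y n ≫ (S.f ▷ Y).f n +
      (S.g ▷ Y).f n ≫ tensorDegreewiseMap s Y n = 𝟙 _ := by
    rw [whiskerRight_f, whiskerRight_f, ← tensorDegreewiseMap_comp, ← tensorDegreewiseMap_comp,
      ← tensorDegreewiseMap_add, funext id, tensorDegreewiseMap_id]
  exact ShortComplex.Splitting.shortExact
    { r := tensorDegreewiseMap r Y n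
      s := tensorDegreewiseMap s Y n
      f_r := f_r'
      s_g := s_g'
      id := id' }

lemma tensorRight_triangleRotate_shortExact {K L : CochainComplex (ModuleCat R) ℤ} (φ : K ⟶ L)
    (Y : CochainComplex (ModuleCat R) ℤ) :
    (tensorRightShortComplex (mappingCone.triangleRotateShortComplex φ) Y).ShortExact :=
  tensorRightShortComplex_shortExact
    (fun n => (mappingCone.triangleRotateShortComplexSplitting φ n).r)
    (fun n => (mappingCone.triangleRotateShortComplexSplitting φ n).s)
    (fun n => (mappingCone.triangleRotateShortComplexSplitting φ n).f_r)
    (fun n => (mappingCone.triangleRotateShortComplexSplitting φ n).s_g)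
    (fun n => (mappingCone.triangleRotateShortComplexSplitting φ n).id) Y

lemma isZero_homology_tensor_of_homotopy {K : CochainComplex (ModuleCat R) ℤ}
    (h : Homotopy (𝟙 K) 0) (Y : CochainComplex (ModuleCat R) ℤ) (n : ℤ) :
    IsZero ((K ⊗ Y).homology n) := by
  have H : Homotopy ((𝟙 K) ▷ Y) ((0 : K ⟶ K) ▷ Y) :=
    HomologicalComplex.mapBifunctorMapHomotopy₁ h (𝟙 Y) (curriedTensor _) _
  rw [id_whiskerRight, zero_whiskerRight] at H
  rw [IsZero.iff_id_eq_zero, ← HomologicalComplex.homologyMap_id, H.homologyMap_eq,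
    HomologicalComplex.homologyMap_zero]

lemma homologyMap_smul {K L : CochainComplex (ModuleCat R) ℤ} (r : R) (f : K ⟶ L) (n : ℤ) :
    HomologicalComplex.homologyMap (r • f) n = r • HomologicalComplex.homologyMap f n :=
  ShortComplex.homologyMap_smul ((HomologicalComplex.shortComplexFunctor _ _ n).map f) r

/-- The morphism from the rotated triangle of `𝟙 K` to the rotated triangle of `φ : K ⟶ L`
which is `φ` on the first term and the identity on the third. -/
def mappingCone.triangleRotateShortComplexOfId {K L : CochainComplex (ModuleCat R) ℤ} (φ : K ⟶ L) :
    mappingCone.triangleRotateShortComplex (𝟙 K) ⟶ mappingCone.triangleRotateShortComplex φ where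
  τ₁ := φ
  τ₂ := mappingCone.map (𝟙 K) φ (𝟙 K) φ rfl
  τ₃ := 𝟙 _
  comm₁₂ := (mappingCone.triangleMap (𝟙 K) φ (𝟙 K) φ rfl).comm₂.symm
  comm₂₃ := by
    have h := (mappingCone.triangleMap (𝟙 K) φ (𝟙 K) φ rfl).comm₃.symm
    refine h.trans ?_
    change _ ≫ (𝟙 K)⟦(1 : ℤ)⟧' = _ ≫ 𝟙 _
    rw [CategoryTheory.Functor.map_id]
    rfl

/-- The functoriality of `tensorRightShortComplex` in the short complex. -/
@[simps]
def tensorRightShortComplexMap {S T : ShortComplex (CochainComplex (ModuleCat R) ℤ)} (φ : S ⟶ T)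
    (Y : CochainComplex (ModuleCat R) ℤ) :
    tensorRightShortComplex S Y ⟶ tensorRightShortComplex T Y where
  τ₁ := φ.τ₁ ▷ Y
  τ₂ := φ.τ₂ ▷ Y
  τ₃ := φ.τ₃ ▷ Y
  comm₁₂ := by
    simp only [tensorRightShortComplex, ← comp_whiskerRight, φ.comm₁₂]
  comm₂₃ := by
    simp only [tensorRightShortComplex, ← comp_whiskerRight, φ.comm₂₃]

/-- The connecting map of the cone of `φ`, tensored with `Y`, factors as an isomorphism followed
by the map induced by `φ`. -/
lemma exists_iso_δ_eq {K L : CochainComplex (ModuleCat R) ℤ} (φ : K ⟶ L)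
    (Y : CochainComplex (ModuleCat R) ℤ) (i j : ℤ) (hij : (ComplexShape.up ℤ).Rel i j) :
    ∃ e : (K⟦(1 : ℤ)⟧ ⊗ Y).homology i ≅ (K ⊗ Y).homology j,
      (tensorRight_triangleRotate_shortExact φ Y).δ i j hij =
        e.hom ≫ HomologicalComplex.homologyMap (φ ▷ Y) j := by
  have hz := isZero_homology_tensor_of_homotopy (mappingCone.homotopyToZeroOfId K) Y
  refine ⟨(tensorRight_triangleRotate_shortExact (𝟙 K) Y).δIso i j hij (hz i) (hz j), ?_⟩
  have h := HomologicalComplex.HomologySequence.δ_naturality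
    (tensorRightShortComplexMap (mappingCone.triangleRotateShortComplexOfId φ) Y)
    (tensorRight_triangleRotate_shortExact (𝟙 K) Y)
    (tensorRight_triangleRotate_shortExact φ Y) i j hij
  have h₃ : HomologicalComplex.homologyMap (𝟙 (K⟦(1 : ℤ)⟧) ▷ Y) i = 𝟙 _ := by
    rw [id_whiskerRight, HomologicalComplex.homologyMap_id]
  exact (h.trans ((congrArg (· ≫ _) h₃).trans (Category.id_comp _))).symm

end CochainComplex

lemma LinearEquiv.nonempty_quotient_smul_top {R M N : Type*} [CommRing R] [AddCommGroup M]
    [Module R M] [AddCommGroup N] [Module R N] (I J : Ideal R)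
    (e : N ≃ₗ[R] M ⧸ I • (⊤ : Submodule R M)) :
    Nonempty ((N ⧸ J • (⊤ : Submodule R N)) ≃ₗ[R] M ⧸ (I ⊔ J) • (⊤ : Submodule R M)) := by
  refine ⟨(Submodule.Quotient.equiv _ ((J • (⊤ : Submodule R M)).map (I • ⊤ : Submodule R M).mkQ)
    e ?_).trans ((Submodule.quotientQuotientEquivQuotientSup _ _).trans
      (Submodule.quotEquivOfEq _ _ (Submodule.sup_smul _ _ _).symm))⟩
  simp [Submodule.map_smul'']

lemma ModuleCat.range_iso_comp_smul_id {R : Type*} [CommRing R] {M N : ModuleCat R} (e : M ≅ N)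
    (x : R) : LinearMap.range (e.hom ≫ (x • 𝟙 N)).hom = Ideal.span {x} • ⊤ := by
  ext y
  rw [Submodule.ideal_span_singleton_smul, Submodule.mem_smul_pointwise_iff_exists]
  constructor
  · rintro ⟨z, rfl⟩
    exact ⟨e.hom z, trivial, rfl⟩
  · rintro ⟨z, -, rfl⟩
    exact ⟨e.inv z, congrArg (x • ·) (e.inv_hom_id_apply z)⟩

/-- If `H^{n+1}(Y)` vanishes, then `H^n(K(x) ⊗ Y)` is `H^n(Y) / x H^n(Y)`. -/
lemma nonempty_homology_koszulOne_tensor (x : R) (Y : CochainComplex (ModuleCat R) ℤ) (n : ℤ)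
    (hY : Subsingleton (Y.homology (n + 1))) :
    Nonempty ((koszulOne R x ⊗ Y).homology n ≃ₗ[R]
      Y.homology n ⧸ Ideal.span {x} • (⊤ : Submodule R (Y.homology n))) := by
  let φ := x • 𝟙 (𝟙_ (CochainComplex (ModuleCat R) ℤ))
  have hS := CochainComplex.tensorRight_triangleRotate_shortExact φ Y
  obtain ⟨e₀, he₀⟩ := CochainComplex.exists_iso_δ_eq φ Y (n - 1) n (by simp)
  obtain ⟨e₁, -⟩ := CochainComplex.exists_iso_δ_eq φ Y n (n + 1) rfl
  let u (m : ℤ) : (𝟙_ (CochainComplex (ModuleCat R) ℤ) ⊗ Y).homology m ≃ₗ[R] Y.homology m :=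
    ((HomologicalComplex.homologyFunctor _ _ m).mapIso (λ_ Y)).toLinearEquiv
  let g : (𝟙_ (CochainComplex (ModuleCat R) ℤ) ⊗ Y).homology n ⟶ (koszulOne R x ⊗ Y).homology n :=
    HomologicalComplex.homologyMap (CochainComplex.mappingCone.inr φ ▷ Y) n
  have hg : Function.Surjective g.hom := by
    have : Subsingleton ((𝟙_ (CochainComplex (ModuleCat R) ℤ) ⊗ Y).homology (n + 1)) :=
      (u (n + 1)).subsingleton
    have h₀ := ModuleCat.isZero_of_subsingleton
      ((𝟙_ (CochainComplex (ModuleCat R) ℤ) ⊗ Y).homology (n + 1))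
    have : Epi g := (hS.homology_exact₂ n).epi_f ((h₀.of_iso e₁).eq_of_tgt _ _)
    exact (ModuleCat.epi_iff_surjective g).1 this
  have hk : LinearMap.ker g.hom = Ideal.span {x} • ⊤ := by
    have h₁ := (ShortComplex.moduleCat_exact_iff_range_eq_ker _).1
      (hS.homology_exact₁ (n - 1) n (by simp))
    have h₂ : HomologicalComplex.homologyMap (φ ▷ Y) n = x • 𝟙 _ := by
      rw [CochainComplex.smul_whiskerRight, CochainComplex.homologyMap_smul, id_whiskerRight,
        HomologicalComplex.homologyMap_id]
    rw [h₂] at he₀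
    exact h₁.symm.trans ((congrArg (fun f => LinearMap.range (ModuleCat.Hom.hom f)) he₀).trans
      (ModuleCat.range_iso_comp_smul_id e₀ x))
  refine ⟨((Submodule.quotEquivOfEq _ _ hk).symm.trans
    (g.hom.quotKerEquivOfSurjective hg)).symm.trans (Submodule.Quotient.equiv _ _ (u n) ?_)⟩
  rw [Submodule.map_smul'', Submodule.map_top, LinearEquiv.range]

/-- Let `x₁, …, xₙ ∈ R` and let `Y` be a complex of `R`-modules with `H_i(Y) = 0` for all
`i < i₀`.  Then `H_i(K^R(x₁,…,xₙ) ⊗_R Y) = 0` for all `i < i₀`, and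
`H_{i₀}(K^R(x₁,…,xₙ) ⊗_R Y) ≅ H_{i₀}(Y)/(x₁,…,xₙ)H_{i₀}(Y)`.

As in the one-element case, we use cohomological (upper) indexing on `ℤ`; reindexing by
`i ↦ -i` turns the chain-complex statement into the one below, where the vanishing hypothesis
and conclusion are for degrees `i > i₀`. -/
theorem stmt_5 (xs : List R) (Y : CochainComplex (ModuleCat R) ℤ) (i₀ : ℤ)
    (hY : ∀ i : ℤ, i₀ < i → Subsingleton (Y.homology i)) :
    (∀ i : ℤ, i₀ < i → Subsingleton ((koszul R xs ⊗ Y).homology i)) ∧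
    Nonempty
      (((koszul R xs ⊗ Y).homology i₀ : ModuleCat R) ≃ₗ[R]
        ((Y.homology i₀ : ModuleCat R) ⧸
          (Ideal.span {y : R | y ∈ xs}) • (⊤ : Submodule R (Y.homology i₀)))) := by
  induction xs generalizing Y with
  | nil =>
    let u (m : ℤ) : (koszul R [] ⊗ Y).homology m ≃ₗ[R] Y.homology m :=
      ((HomologicalComplex.homologyFunctor _ _ m).mapIso (λ_ Y)).toLinearEquiv
    refine ⟨fun i hi => ?_, ⟨(u i₀).trans (Submodule.quotEquivOfEqBot _ ?_).symm⟩⟩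
    · have := hY i hi
      exact (u i).subsingleton
    · simp
  | cons x xs ih =>
    have hK (i : ℤ) (hi : i₀ ≤ i) :=
      nonempty_homology_koszulOne_tensor R x Y i (hY (i + 1) (by lia))
    obtain ⟨h₁, ⟨e⟩⟩ := ih (koszulOne R x ⊗ Y) fun i hi => by
      have := hY i hi
      obtain ⟨e⟩ := hK i hi.le
      exact e.subsingleton
    let u (m : ℤ) : (koszul R (x :: xs) ⊗ Y).homology m ≃ₗ[R]
        (koszul R xs ⊗ koszulOne R x ⊗ Y).homology m :=
      ((HomologicalComplex.homologyFunctor _ _ m).mapIso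
        (α_ (koszul R xs) (koszulOne R x) Y)).toLinearEquiv
    refine ⟨fun i hi => ?_, ?_⟩
    · have := h₁ i hi
      exact (u i).subsingleton
    · obtain ⟨e₁⟩ := hK i₀ le_rfl
      obtain ⟨e₂⟩ := e₁.nonempty_quotient_smul_top _ (Ideal.span {y : R | y ∈ xs})
      have hs : {y : R | y ∈ x :: xs} = insert x {y : R | y ∈ xs} := by
        ext y
        simp
      rw [hs, Ideal.span_insert]
      exact ⟨(u i₀).trans (e.trans e₂)⟩

end
end

section
/- Let φ : R → S be a flat ring homomorphism of commutative noetherian rings, and let M be an R-module. Then Ext^i_R(S, M) = 0 for all i > dim(R/Ann_R(M)). In particular, if M is finitely generated, Ext^i_R(S, M) = 0 for all i > dim_R(M). -/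
open CategoryTheory

namespace FlatCotorsion

open TensorProduct

section Flat

variable {B : Type*} [CommRing B] {L : Type*} [AddCommGroup L] [Module B L]

/-- The solutions in a flat module of a finite homogeneous linear system are combinations of
solutions in the ring. -/
theorem exists_solutions_of_flat [Module.Flat B L] {ι κ : Type*} [Fintype ι] [Fintype κ]
    (b : κ → ι → B) (v : ι → L) (h : ∀ k, ∑ i, b k i • v i = 0) :
    ∃ (t : ℕ) (ζ : Fin t → ι → B) (y : Fin t → L),
      (∀ s k, ∑ i, b k i * ζ s i = 0) ∧ ∀ i, v i = ∑ s, ζ s i • y s := by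
  classical
  have hf : Fintype.linearCombination B v ∘ₗ Fintype.linearCombination B b = 0 := by
    ext k
    simpa [Fintype.linearCombination_apply] using h k
  obtain ⟨t, a, y, hxy, ha⟩ := Module.Flat.exists_factorization_of_comp_eq_zero_of_free hf
  refine ⟨t, fun s i => a (Pi.single i 1) s, fun s => y (Finsupp.single s 1), ?_, ?_⟩
  · intro s k
    have h1 := DFunLike.congr_fun (LinearMap.congr_fun ha (Pi.single k 1)) s
    have h2 : b k = ∑ i, b k i • (Pi.single i 1 : ι → B) := by
      ext j; simp [Finset.sum_apply, Pi.single_apply]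
    simp only [LinearMap.comp_apply, Fintype.linearCombination_apply_single, one_smul] at h1
    rw [h2] at h1
    simpa using h1
  · intro i
    have h1 := LinearMap.congr_fun hxy (Pi.single i 1)
    simp only [Fintype.linearCombination_apply_single, one_smul, LinearMap.comp_apply] at h1
    rw [h1]
    conv_lhs => rw [← Finsupp.univ_sum_single (a (Pi.single i 1))]
    rw [map_sum]
    refine Finset.sum_congr rfl fun s _ => ?_
    rw [← map_smul, Finsupp.smul_single, smul_eq_mul, mul_one]

theorem mem_span_smul_top_iff {r : ℕ} (g : Fin r → B) (x : L) :
    x ∈ Ideal.span (Set.range g) • (⊤ : Submodule B L) ↔ ∃ y : Fin r → L, x = ∑ i, g i • y i := by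
  constructor
  · intro hx
    induction hx using Submodule.smul_induction_on' with
    | smul a ha n _ =>
      obtain ⟨c, rfl⟩ := (Ideal.mem_span_range_iff_exists_fun).1 ha
      exact ⟨fun i => c i • n, by simp [Finset.sum_smul, smul_smul, mul_comm]⟩
    | add x _ y _ hx hy =>
      obtain ⟨u, rfl⟩ := hx
      obtain ⟨w, rfl⟩ := hy
      exact ⟨u + w, by simp [Finset.sum_add_distrib]⟩
  · rintro ⟨y, rfl⟩
    exact Submodule.sum_mem _ fun i _ =>
      Submodule.smul_mem_smul (Ideal.subset_span ⟨i, rfl⟩) trivial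

theorem exists_generators [IsNoetherianRing B] (J : Ideal B) :
    ∃ (r : ℕ) (g : Fin r → B), Ideal.span (Set.range g) = J :=
  Submodule.fg_iff_exists_fin_generating_family.1 (IsNoetherian.noetherian J)

/-- Artin-Rees for the image of a matrix acting on a flat module. -/
theorem exists_artinRees_flat [IsNoetherianRing B] [Module.Flat B L] (I : Ideal B) {ι κ : Type*}
    [Fintype ι] [Fintype κ] (b : κ → ι → B) :
    ∃ c : ℕ, ∀ (n : ℕ) (z : ι → L), (∀ k, ∑ i, b k i • z i ∈ I ^ (n + c) • (⊤ : Submodule B L)) →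
      ∃ u : ι → L, (∀ i, u i ∈ I ^ n • (⊤ : Submodule B L)) ∧
        ∀ k, ∑ i, b k i • u i = ∑ i, b k i • z i := by
  classical
  let φ : (ι → B) →ₗ[B] (κ → B) := Matrix.mulVecLin (Matrix.of b)
  have hφ : ∀ z k, φ z k = ∑ i, b k i * z i := fun z k => rfl
  obtain ⟨c, hc⟩ := Ideal.exists_pow_inf_eq_pow_smul I (LinearMap.range φ)
  -- the ring case
  have key : ∀ (n : ℕ) (ζ : ι → B), (∀ k, ∑ i, b k i * ζ i ∈ I ^ (n + c)) →
      ∃ u : ι → B, (∀ i, u i ∈ I ^ n) ∧ ∀ k, ∑ i, b k i * u i = ∑ i, b k i * ζ i := by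
    intro n ζ hζ
    have h1 : φ ζ ∈ I ^ (n + c) • (⊤ : Submodule B (κ → B)) ⊓ LinearMap.range φ := by
      refine ⟨?_, ⟨ζ, rfl⟩⟩
      rw [pi_eq_sum_univ' (φ ζ)]
      exact Submodule.sum_mem _ fun k _ => Submodule.smul_mem_smul (hζ k) trivial
    rw [hc _ (Nat.le_add_left _ _), Nat.add_sub_cancel] at h1
    have h2 : φ ζ ∈ Submodule.map φ (I ^ n • ⊤) := by
      rw [Submodule.map_smul'', Submodule.map_top]
      exact Submodule.smul_mono le_rfl inf_le_right h1
    obtain ⟨u, hu, hu2⟩ := h2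
    refine ⟨u, fun i => ?_, fun k => congrFun hu2 k⟩
    have := Submodule.mem_map_of_mem (f := LinearMap.proj i) hu
    rw [Submodule.map_smul''] at this
    have := Submodule.smul_mono (le_refl (I ^ n)) le_top this
    simpa using this
  refine ⟨c, fun n z hz => ?_⟩
  obtain ⟨r, g, hg⟩ := exists_generators (I ^ (n + c))
  simp_rw [← hg, mem_span_smul_top_iff] at hz
  choose y hy using hz
  obtain ⟨t, ζ, w, h1, h2⟩ := exists_solutions_of_flat
    (L := L) (ι := ι ⊕ (κ × Fin r)) (κ := κ)
    (fun k => Sum.elim (b k) fun p => if p.1 = k then - g p.2 else 0)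
    (Sum.elim z fun p => y p.1 p.2) (by
      intro k
      simp [Fintype.sum_sum_type, hy, Fintype.sum_prod_type, ite_smul])
  have h3 : ∀ s, ∃ u : ι → B, (∀ i, u i ∈ I ^ n) ∧
      ∀ k, ∑ i, b k i * u i = ∑ i, b k i * ζ s (Sum.inl i) := by
    intro s
    refine key n (fun i => ζ s (Sum.inl i)) fun k => ?_
    have := h1 s k
    simp only [Fintype.sum_sum_type, Sum.elim_inl, Sum.elim_inr, Fintype.sum_prod_type,
      ite_mul, zero_mul] at this
    rw [add_eq_zero_iff_eq_neg] at this
    rw [this, neg_mem_iff]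
    refine Submodule.sum_mem _ fun k' _ => Submodule.sum_mem _ fun j _ => ?_
    split_ifs
    · rw [← hg]
      exact Ideal.mul_mem_right _ _ (neg_mem (Ideal.subset_span ⟨j, rfl⟩))
    · exact zero_mem _
  choose u hu hu' using h3
  refine ⟨fun i => ∑ s, u s i • w s, fun i => Submodule.sum_mem _ fun s _ =>
    Submodule.smul_mem_smul (hu s i) trivial, fun k => ?_⟩
  have h4 : ∀ i, z i = ∑ s, ζ s (Sum.inl i) • w s := fun i => h2 (Sum.inl i)
  simp_rw [h4, Finset.smul_sum, smul_smul]
  rw [Finset.sum_comm, Finset.sum_comm (s := Finset.univ (α := ι))]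
  simp_rw [← Finset.sum_smul, hu']

/-- The module of relations between finitely many elements of a noetherian ring is finitely
generated. -/
theorem exists_syzygies [IsNoetherianRing B] {l : ℕ} (f : Fin l → B) :
    ∃ (m : ℕ) (b : Fin l → Fin m → B), (∀ j, ∑ i, f i * b i j = 0) ∧
      ∀ ζ : Fin l → B, ∑ i, f i * ζ i = 0 → ∃ c : Fin m → B, ∀ i, ζ i = ∑ j, b i j * c j := by
  obtain ⟨m, b, hb⟩ := Submodule.fg_iff_exists_fin_generating_family.1
    (IsNoetherian.noetherian (LinearMap.ker (Fintype.linearCombination B f)))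
  refine ⟨m, fun i j => b j i, fun j => ?_, fun ζ hζ => ?_⟩
  · have : b j ∈ LinearMap.ker (Fintype.linearCombination B f) :=
      hb ▸ Submodule.subset_span ⟨j, rfl⟩
    simpa [Fintype.linearCombination_apply, mul_comm] using this
  · have : ζ ∈ Submodule.span B (Set.range b) := by
      rw [hb]
      simpa [Fintype.linearCombination_apply, mul_comm] using hζ
    obtain ⟨c, rfl⟩ := (Submodule.mem_span_range_iff_exists_fun B).1 this
    exact ⟨c, fun i => by simp [mul_comm]⟩

theorem exists_eq_sum_of_syzygies [Module.Flat B L] {l m : ℕ} {f : Fin l → B}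
    {b : Fin l → Fin m → B}
    (hbf : ∀ ζ : Fin l → B, ∑ i, f i * ζ i = 0 → ∃ c : Fin m → B, ∀ i, ζ i = ∑ j, b i j * c j)
    (z : Fin l → L) (hz : ∑ i, f i • z i = 0) : ∃ y : Fin m → L, ∀ i, z i = ∑ j, b i j • y j := by
  obtain ⟨t, ζ, w, h1, h2⟩ := exists_solutions_of_flat (fun _ : Unit => f) z fun _ => hz
  choose c hc using fun s => hbf (ζ s) (h1 s ())
  refine ⟨fun j => ∑ s, c s j • w s, fun i => ?_⟩
  simp_rw [h2, hc, Finset.smul_sum, Finset.sum_smul, smul_smul]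
  exact Finset.sum_comm

/-- Products of flat modules over a noetherian ring are flat. -/
theorem flat_pi [IsNoetherianRing B] {X : Type*} (T : X → Type*) [∀ p, AddCommGroup (T p)]
    [∀ p, Module B (T p)] [∀ p, Module.Flat B (T p)] : Module.Flat B (∀ p, T p) := by
  refine Module.Flat.of_forall_isTrivialRelation fun {l f x} hx => ?_
  obtain ⟨m, b, hfb, hbf⟩ := exists_syzygies f
  choose y hy using fun p => exists_eq_sum_of_syzygies (L := T p) hbf (fun i => x i p)
    (by simpa using congrFun hx p)
  refine ⟨m, b, fun j p => y p j, fun i => ?_, hfb⟩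
  ext p
  simpa using hy p i

/-- The adic completion of a flat module over a noetherian ring is flat. -/
theorem flat_adicCompletion [IsNoetherianRing B] [Module.Flat B L] (I : Ideal B) :
    Module.Flat B (AdicCompletion I L) := by
  refine Module.Flat.of_forall_isTrivialRelation fun {l f x} hx => ?_
  obtain ⟨m, b, hfb, hbf⟩ := exists_syzygies f
  have hbfL := fun z hz => exists_eq_sum_of_syzygies (L := L) hbf z hz
  obtain ⟨c, hc⟩ := exists_artinRees_flat (L := L) I (fun _ : Unit => f)
  obtain ⟨c', hc'⟩ := exists_artinRees_flat (L := L) I b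
  -- approximate solutions
  have happ : ∀ n, ∃ z : Fin m → L, ∀ i,
      (x i).val n = Submodule.Quotient.mk (∑ j, b i j • z j) := by
    intro n
    choose v hv using fun i => Submodule.Quotient.mk_surjective _ ((x i).val (n + c))
    have h1 : ∑ i, f i • v i ∈ I ^ (n + c) • (⊤ : Submodule B L) := by
      rw [← Submodule.Quotient.mk_eq_zero, ← Submodule.mkQ_apply, map_sum]
      have := congrArg (AdicCompletion.eval I L (n + c)) hx
      simpa [hv, AdicCompletion.eval_apply] using this
    obtain ⟨u, hu, hu'⟩ := hc n v fun _ => h1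
    obtain ⟨z, hz⟩ := hbfL (v - u) (by simp [smul_sub, hu' ()])
    refine ⟨z, fun i => ?_⟩
    rw [← hz, ← AdicCompletion.transitionMap_comp_eval_apply I L (Nat.le_add_right n c) (x i), ← hv]
    refine (Submodule.Quotient.eq _).2 ?_
    simpa using hu i
  choose z hz using happ
  have hstep : ∀ (n : ℕ) (w : Fin m → L),
      (∀ i, (x i).val (n + c') = Submodule.Quotient.mk (∑ j, b i j • w j)) →
      ∃ w' : Fin m → L, (∀ i, (x i).val (n + 1 + c') = Submodule.Quotient.mk (∑ j, b i j • w' j)) ∧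
        ∀ j, w' j - w j ∈ I ^ n • (⊤ : Submodule B L) := by
    intro n w hw
    obtain ⟨u, hu, hu'⟩ := hc' n (z (n + 1 + c') - w) (by
      intro i
      have h1 := AdicCompletion.transitionMap_comp_eval_apply I L
        (show n + c' ≤ n + 1 + c' by omega) (x i)
      rw [hw, hz] at h1
      have h2 := (Submodule.Quotient.eq _).1 h1
      simpa [smul_sub] using h2)
    refine ⟨w + u, fun i => ?_, fun j => by simpa using hu j⟩
    rw [hz]
    congr 1
    simp [smul_add, Finset.sum_add_distrib, hu', smul_sub]
  choose! nxt hn1 hn2 using hstep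
  let w : ℕ → Fin m → L := fun n => Nat.rec (z (0 + c')) (fun n w => nxt n w) n
  have hw : ∀ n i, (x i).val (n + c') = Submodule.Quotient.mk (∑ j, b i j • w n j) := by
    intro n
    induction n with
    | zero => exact hz _
    | succ n ih => exact hn1 n _ ih
  have hw' : ∀ n j, w (n + 1) j - w n j ∈ I ^ n • (⊤ : Submodule B L) := fun n => hn2 n _ (hw n)
  let y : Fin m → AdicCompletion I L := fun j =>
    AdicCompletion.mk I L (AdicCompletion.AdicCauchySequence.mk I L (fun n => w n j) fun n =>
      ((SModEq.sub_mem).2 (hw' n j)).symm)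
  have hy : ∀ n j, (y j).val n = Submodule.Quotient.mk (w n j) := fun n j => rfl
  refine ⟨m, b, y, fun i => ?_, hfb⟩
  ext n
  rw [← AdicCompletion.transitionMap_comp_eval_apply I L (Nat.le_add_right n c') (x i), hw,
    ← AdicCompletion.eval_apply, map_sum]
  simp only [map_smul, AdicCompletion.eval_apply, hy]
  simp [← Submodule.mkQ_apply]

theorem mem_smul_top_of_forall_smul_mem [IsNoetherianRing B] [Module.Flat B L] {κ : Type*}
    [Fintype κ] (c : κ → B) (J : κ → Ideal B) (K : Ideal B)
    (hK : ∀ a, (∀ k, c k * a ∈ J k) → a ∈ K) (x : L)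
    (hx : ∀ k, c k • x ∈ J k • (⊤ : Submodule B L)) : x ∈ K • (⊤ : Submodule B L) := by
  classical
  choose r g hg using fun k => exists_generators (J k)
  have hx' : ∀ k, ∃ y : Fin (r k) → L, c k • x = ∑ i, g k i • y i := fun k =>
    (mem_span_smul_top_iff _ _).1 (by rw [hg]; exact hx k)
  choose y hy using hx'
  obtain ⟨t, ζ, w, h1, h2⟩ := exists_solutions_of_flat
    (L := L) (ι := Unit ⊕ (Σ k, Fin (r k))) (κ := κ)
    (fun k => Sum.elim (fun _ => c k) fun p => if p.1 = k then - g p.1 p.2 else 0)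
    (Sum.elim (fun _ => x) fun p => y p.1 p.2) (by
      intro k
      simp [Fintype.sum_sum_type, hy, Fintype.sum_sigma, ite_smul])
  have h3 : x = ∑ s, ζ s (Sum.inl ()) • w s := h2 (Sum.inl ())
  rw [h3]
  refine Submodule.sum_mem _ fun s _ => Submodule.smul_mem_smul (hK _ fun k => ?_) trivial
  have := h1 s k
  simp only [Fintype.sum_sum_type, Sum.elim_inl, Sum.elim_inr, Fintype.sum_sigma,
    ite_mul, zero_mul, Finset.univ_unique, Finset.sum_singleton] at this
  rw [add_eq_zero_iff_eq_neg] at this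
  erw [this]
  rw [neg_mem_iff]
  refine Submodule.sum_mem _ fun k' _ => Submodule.sum_mem _ fun j _ => ?_
  split_ifs with h
  · subst h
    rw [← hg]
    exact Ideal.mul_mem_right _ _ (neg_mem (Ideal.subset_span ⟨j, rfl⟩))
  · exact zero_mem _

/-- Membership in `J • L`, for `L` flat over a noetherian ring, can be tested after localizing at
each prime `p` and reducing modulo each power of `p`. -/
theorem mem_smul_top_of_forall_prime [IsNoetherianRing B] [Module.Flat B L] (x : L) (J : Ideal B)
    (hx : ∀ (p : PrimeSpectrum B) (n : ℕ), ∃ s ∉ p.asIdeal,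
      s • x ∈ (J ⊔ p.asIdeal ^ n) • (⊤ : Submodule B L)) : x ∈ J • (⊤ : Submodule B L) := by
  induction J using IsNoetherian.induction with | hgt J ih =>
  change Ideal B at J
  have hgt : ∀ J' > J, x ∈ J' • (⊤ : Submodule B L) := fun J' hJ' => ih J' hJ' fun p n => by
    obtain ⟨s, hs, h⟩ := hx p n
    exact ⟨s, hs, Submodule.smul_mono (sup_le_sup_right hJ'.le _) le_rfl h⟩
  by_contra hxJ
  have hirr : InfIrred J := by
    refine ⟨fun h => hxJ ?_, fun J₁ J₂ h => ?_⟩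
    · rw [isMax_iff_eq_top.1 h, Submodule.top_smul]
      trivial
    · by_contra! hne
      have h₁ : J₁ > J := lt_of_le_of_ne (h ▸ inf_le_left) hne.1.symm
      have h₂ : J₂ > J := lt_of_le_of_ne (h ▸ inf_le_right) hne.2.symm
      refine hxJ (mem_smul_top_of_forall_smul_mem (fun _ : Bool => 1)
        (fun k => cond k J₁ J₂) J ?_ x ?_)
      · intro a ha
        rw [← h]
        exact ⟨by simpa using ha true, by simpa using ha false⟩
      · rintro (_ | _)
        · simpa using hgt _ h₂
        · simpa using hgt _ h₁
  have hprim : J.IsPrimary := hirr.isPrimary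
  obtain ⟨n, hn⟩ := J.exists_radical_pow_le_of_fg (IsNoetherian.noetherian _)
  obtain ⟨s, hs, h⟩ := hx ⟨J.radical, Ideal.isPrime_radical hprim⟩ n
  rw [sup_eq_left.2 hn] at h
  refine hxJ (mem_smul_top_of_forall_smul_mem (fun _ : Unit => s) (fun _ => J) J ?_ x fun _ => h)
  intro a ha
  have := ha ()
  rw [mul_comm] at this
  exact ((Ideal.isPrimary_iff.1 hprim).2 this).resolve_right hs

/-- The quotient of a flat module by a pure submodule is flat. -/
theorem flat_of_pure {C L' : Type*} [AddCommGroup C] [Module B C] [AddCommGroup L'] [Module B L']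
    [Module.Flat B C] (ι : L →ₗ[B] C) (π : C →ₗ[B] L') (hπ : Function.Surjective π)
    (hex : Function.Exact ι π)
    (hpure : ∀ (J : Ideal B) (x : L), ι x ∈ J • (⊤ : Submodule B C) →
      x ∈ J • (⊤ : Submodule B L)) : Module.Flat B L' := by
  refine Module.Flat.of_forall_isTrivialRelation fun {l f x} hx => ?_
  choose c hc using fun i => hπ (x i)
  obtain ⟨v, hv⟩ := (hex (∑ i, f i • c i)).1 (by simpa [hc] using hx)
  obtain ⟨y, rfl⟩ := (mem_span_smul_top_iff f v).1
    (hpure _ v (hv ▸ (mem_span_smul_top_iff f _).2 ⟨c, rfl⟩))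
  obtain ⟨k, a, z, h1, h2⟩ := Module.Flat.isTrivialRelation_of_sum_smul_eq_zero
    (f := f) (x := fun i => c i - ι (y i)) (by simp [smul_sub, ← hv])
  refine ⟨k, a, fun j => π (z j), fun i => ?_, h2⟩
  have := congrArg π (h1 i)
  simpa [hc, hex.apply_apply_eq_zero] using this

/-- The kernel of a surjection between flat modules is flat. -/
theorem flat_of_exact {K P F : Type*} [AddCommGroup K] [Module B K] [AddCommGroup P] [Module B P]
    [AddCommGroup F] [Module B F] [Module.Flat B P] [Module.Flat B F] (i : K →ₗ[B] P)
    (π : P →ₗ[B] F) (hi : Function.Injective i) (hex : Function.Exact i π)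
    (hπ : Function.Surjective π) : Module.Flat B K := by
  rw [Module.Flat.iff_rTensor_injective']
  intro I
  have h1 : Function.Injective (i.lTensor I) :=
    LinearMap.lTensor_injective_of_exact_of_flat π hπ i hi hex I
  have h2 : Function.Injective (I.subtype.rTensor P) :=
    Module.Flat.rTensor_preserves_injective_linearMap _ Subtype.val_injective
  have h3 : i.lTensor B ∘ₗ I.subtype.rTensor K = I.subtype.rTensor P ∘ₗ i.lTensor I := by
    ext; rfl
  have h4 : Function.Injective (i.lTensor B ∘ₗ I.subtype.rTensor K) := by
    rw [h3]
    exact h2.comp h1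
  exact Function.Injective.of_comp h4

end Flat

section Cotorsion

/-- A module `T` is cotorsion if `Ext¹(F, T) = 0` for all flat `F`; the vanishing is phrased as
extension of maps along short exact sequences `0 → K → P → F → 0` with `P` projective. -/
def IsCotorsion (B : Type) [CommRing B] (T : Type) [AddCommGroup T] [Module B T] : Prop :=
  ∀ (K P F : Type) [AddCommGroup K] [Module B K] [AddCommGroup P] [Module B P]
    [AddCommGroup F] [Module B F] [Module.Projective B P] [Module.Flat B F]
    (i : K →ₗ[B] P) (π : P →ₗ[B] F), Function.Injective i → Function.Exact i π →
    Function.Surjective π → ∀ f : K →ₗ[B] T, ∃ g : P →ₗ[B] T, g ∘ₗ i = f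

theorem IsCotorsion.of_field (k : Type) [Field k] (T : Type) [AddCommGroup T] [Module k T] :
    IsCotorsion k T := by
  intro K P F _ _ _ _ _ _ _ _ i π hi _ _ f
  obtain ⟨j, hj⟩ := i.exists_leftInverse_of_injective (LinearMap.ker_eq_bot.2 hi)
  exact ⟨f ∘ₗ j, by rw [LinearMap.comp_assoc, hj, LinearMap.comp_id]⟩

theorem IsCotorsion.restrictScalars (A : Type) {B T : Type} [CommRing A] [CommRing B] [Algebra A B]
    [AddCommGroup T] [Module A T] [Module B T] [IsScalarTower A B T] (hT : IsCotorsion B T) :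
    IsCotorsion A T := by
  intro K P F _ _ _ _ _ _ _ _ i π hi hex hπ f
  obtain ⟨g, hg⟩ := hT (B ⊗[A] K) (B ⊗[A] P) (B ⊗[A] F) (i.baseChange B) (π.baseChange B)
    (LinearMap.lTensor_injective_of_exact_of_flat π hπ i hi hex B)
    (lTensor_exact B hex hπ) (LinearMap.lTensor_surjective B hπ) (f.liftBaseChange B)
  refine ⟨g.restrictScalars A ∘ₗ TensorProduct.mk A B P 1, ?_⟩
  ext x
  have := LinearMap.congr_fun hg (1 ⊗ₜ x)
  simpa using this

theorem IsCotorsion.pi {B : Type} [CommRing B] {X : Type} (T : X → Type) [∀ p, AddCommGroup (T p)]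
    [∀ p, Module B (T p)] (hT : ∀ p, IsCotorsion B (T p)) : IsCotorsion B (∀ p, T p) := by
  intro K P F _ _ _ _ _ _ _ _ i π hi hex hπ f
  choose g hg using fun p => hT p K P F i π hi hex hπ (LinearMap.proj p ∘ₗ f)
  refine ⟨LinearMap.pi g, ?_⟩
  ext x p
  exact LinearMap.congr_fun (hg p) x

theorem IsCotorsion.of_torsionBy {B : Type} [CommRing B] (m : Ideal B) [m.IsMaximal]
    (T : Type) [AddCommGroup T] [Module B T] (hT : Module.IsTorsionBySet B T m) :
    IsCotorsion B T := by
  let := Ideal.Quotient.field m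
  let : Module (B ⧸ m) T := hT.module
  have : IsScalarTower B (B ⧸ m) T := hT.isScalarTower
  exact (IsCotorsion.of_field (B ⧸ m) T).restrictScalars B

theorem IsCotorsion.adicCompletion {B : Type} [CommRing B] (m : Ideal B) [m.IsMaximal]
    (L : Type) [AddCommGroup L] [Module B L] : IsCotorsion B (AdicCompletion m L) := by
  intro K P F _ _ _ _ _ _ _ _ i π hi hex hπ f
  have hstep : ∀ (n : ℕ) (g : P →ₗ[B] L ⧸ (m ^ n • ⊤ : Submodule B L)),
      g ∘ₗ i = AdicCompletion.eval m L n ∘ₗ f →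
      ∃ g' : P →ₗ[B] L ⧸ (m ^ (n + 1) • ⊤ : Submodule B L),
        g' ∘ₗ i = AdicCompletion.eval m L (n + 1) ∘ₗ f ∧
        AdicCompletion.transitionMap m L n.le_succ ∘ₗ g' = g := by
    intro n g hg
    let τ := AdicCompletion.transitionMap m L n.le_succ
    have hτ : Function.Surjective τ := Submodule.factor_surjective _
    obtain ⟨h, hh⟩ := Module.projective_lifting_property τ g hτ
    have hker : Module.IsTorsionBySet B (LinearMap.ker τ) m := by
      rintro ⟨x, hx⟩ ⟨a, ha⟩
      obtain ⟨x, rfl⟩ := Submodule.Quotient.mk_surjective _ x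
      have hx' : x ∈ m ^ n • (⊤ : Submodule B L) := (Submodule.Quotient.mk_eq_zero _).1 hx
      ext
      refine (Submodule.Quotient.mk_eq_zero _).2 ?_
      rw [pow_succ', Submodule.mul_smul]
      exact Submodule.smul_mem_smul ha hx'
    let e : K →ₗ[B] LinearMap.ker τ := LinearMap.codRestrict _
      (AdicCompletion.eval m L (n + 1) ∘ₗ f - h ∘ₗ i) (by
        intro x
        have h1 := LinearMap.congr_fun hg x
        have h2 := LinearMap.congr_fun hh (i x)
        simp only [LinearMap.comp_apply] at h1 h2
        rw [LinearMap.mem_ker, LinearMap.sub_apply, map_sub, LinearMap.comp_apply,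
          LinearMap.comp_apply, h2, h1, sub_eq_zero]
        exact AdicCompletion.transitionMap_comp_eval_apply m L n.le_succ (f x))
    obtain ⟨e', he'⟩ := IsCotorsion.of_torsionBy m _ hker K P F i π hi hex hπ e
    refine ⟨h + (LinearMap.ker τ).subtype ∘ₗ e', ?_, ?_⟩
    · ext x
      have := congrArg Subtype.val (LinearMap.congr_fun he' x)
      simp only [LinearMap.comp_apply, e, LinearMap.codRestrict_apply, LinearMap.sub_apply] at this
      simp [this]
    · ext x
      have h1 : τ (e' x) = 0 := (e' x).2
      have h2 : τ (h x) = g x := LinearMap.congr_fun hh x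
      simp only [LinearMap.comp_apply, LinearMap.add_apply, map_add]
      change τ (h x) + τ (e' x) = g x
      rw [h1, h2, add_zero]
  choose! nxt hn1 hn2 using hstep
  let g : ∀ n : ℕ, P →ₗ[B] L ⧸ (m ^ n • ⊤ : Submodule B L) := fun n => Nat.rec 0 nxt n
  have hg : ∀ n, g n ∘ₗ i = AdicCompletion.eval m L n ∘ₗ f := by
    intro n
    induction n with
    | zero =>
      have : Subsingleton (L ⧸ (m ^ 0 • ⊤ : Submodule B L)) :=
        Submodule.Quotient.subsingleton_iff.2 (by simp)
      ext x
      exact Subsingleton.elim _ _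
    | succ n ih => exact hn1 n _ ih
  have hg' : ∀ {a b : ℕ} (hab : a ≤ b), AdicCompletion.transitionMap m L hab ∘ₗ g b = g a := by
    intro a b hab
    induction b, hab using Nat.le_induction with
    | base => ext x; simp
    | succ b hab ih =>
      rw [← ih, ← hn2 b (g b) (hg b)]
      ext x
      change _ = AdicCompletion.transitionMap m L hab
        (AdicCompletion.transitionMap m L b.le_succ (g (b + 1) x))
      rw [← LinearMap.comp_apply (AdicCompletion.transitionMap m L hab)]
      simp
  refine ⟨AdicCompletion.lift m g hg', ?_⟩
  ext x n
  exact LinearMap.congr_fun (hg n) x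

end Cotorsion

section LocalCompletion

variable {A : Type} [CommRing A] (p : PrimeSpectrum A) (L : Type) [AddCommGroup L] [Module A L]

/-- The completion of the localization `L_p` with respect to the maximal ideal of `A_p`. -/
abbrev LocalCompletion : Type :=
  AdicCompletion (IsLocalRing.maximalIdeal (Localization.AtPrime p.asIdeal))
    (LocalizedModule p.asIdeal.primeCompl L)

/-- The canonical map from `L` to the completion of `L_p`. -/
noncomputable def toLocalCompletion : L →ₗ[A] LocalCompletion p L :=
  (AdicCompletion.of (IsLocalRing.maximalIdeal (Localization.AtPrime p.asIdeal))
    (LocalizedModule p.asIdeal.primeCompl L)).restrictScalars A ∘ₗ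
    LocalizedModule.mkLinearMap p.asIdeal.primeCompl L

theorem flat_localCompletion [IsNoetherianRing A] [Module.Flat A L] :
    Module.Flat A (LocalCompletion p L) := by
  have : IsNoetherianRing (Localization.AtPrime p.asIdeal) :=
    IsLocalization.isNoetherianRing p.asIdeal.primeCompl _ inferInstance
  have : Module.Flat (Localization.AtPrime p.asIdeal) (LocalCompletion p L) :=
    flat_adicCompletion _
  exact Module.Flat.trans A (Localization.AtPrime p.asIdeal) _

theorem isCotorsion_localCompletion : IsCotorsion A (LocalCompletion p L) :=
  (IsCotorsion.adicCompletion (IsLocalRing.maximalIdeal (Localization.AtPrime p.asIdeal))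
    (LocalizedModule p.asIdeal.primeCompl L)).restrictScalars A

theorem mem_maximalIdeal_pow_smul_top_iff {T : Type*} [AddCommGroup T] [Module A T]
    [Module (Localization.AtPrime p.asIdeal) T] [IsScalarTower A (Localization.AtPrime p.asIdeal) T]
    (n : ℕ) (x : T) :
    x ∈ IsLocalRing.maximalIdeal (Localization.AtPrime p.asIdeal) ^ n •
      (⊤ : Submodule (Localization.AtPrime p.asIdeal) T) ↔
      x ∈ p.asIdeal ^ n • (⊤ : Submodule A T) := by
  rw [← Localization.AtPrime.map_eq_maximalIdeal, ← Ideal.map_pow,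
    ← Submodule.restrictScalars_mem A, Ideal.smul_restrictScalars, Submodule.restrictScalars_top]

variable {L}

theorem exists_smul_mem_of_mk_mem (J : Ideal A) (x : L)
    (hx : LocalizedModule.mkLinearMap p.asIdeal.primeCompl L x ∈
      J • (⊤ : Submodule A (LocalizedModule p.asIdeal.primeCompl L))) :
    ∃ s ∉ p.asIdeal, s • x ∈ J • (⊤ : Submodule A L) := by
  have key : ∀ y ∈ J • (⊤ : Submodule A (LocalizedModule p.asIdeal.primeCompl L)),
      ∃ s : p.asIdeal.primeCompl, ∃ l ∈ J • (⊤ : Submodule A L),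
        s • y = LocalizedModule.mkLinearMap p.asIdeal.primeCompl L l := by
    intro y hy
    induction hy using Submodule.smul_induction_on' with
    | smul a ha z _ =>
      obtain ⟨⟨l, s⟩, hl⟩ := IsLocalizedModule.surj p.asIdeal.primeCompl
        (LocalizedModule.mkLinearMap p.asIdeal.primeCompl L) z
      refine ⟨s, a • l, Submodule.smul_mem_smul ha trivial, ?_⟩
      rw [smul_comm, hl, map_smul]
    | add y _ z _ hy hz =>
      obtain ⟨s, l, hl, h⟩ := hy
      obtain ⟨s', l', hl', h'⟩ := hz
      refine ⟨s * s', s' • l + s • l', add_mem (Submodule.smul_mem _ _ hl)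
        (Submodule.smul_mem _ _ hl'), ?_⟩
      rw [map_add, LinearMap.map_smul_of_tower, LinearMap.map_smul_of_tower, ← h, ← h', smul_add,
        mul_smul, mul_smul, smul_comm s s' y]
  obtain ⟨s, l, hl, h⟩ := key _ hx
  rw [← LinearMap.map_smul_of_tower,
    IsLocalizedModule.eq_iff_exists p.asIdeal.primeCompl] at h
  obtain ⟨c, hc⟩ := h
  refine ⟨(c * s : p.asIdeal.primeCompl), (c * s).2, ?_⟩
  change (c * s) • x ∈ _
  rw [mul_smul, hc]
  exact Submodule.smul_mem _ _ hl

theorem exists_smul_mem_of_toLocalCompletion_mem (J : Ideal A) (x : L)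
    (hx : toLocalCompletion p L x ∈ J • (⊤ : Submodule A (LocalCompletion p L))) (n : ℕ) :
    ∃ s ∉ p.asIdeal, s • x ∈ (J ⊔ p.asIdeal ^ n) • (⊤ : Submodule A L) := by
  apply exists_smul_mem_of_mk_mem
  have h1 : ∀ t ∈ J • (⊤ : Submodule A (LocalCompletion p L)), ∃ y ∈ J •
      (⊤ : Submodule A (LocalizedModule p.asIdeal.primeCompl L)),
      t.val n = Submodule.Quotient.mk y := by
    intro t ht
    induction ht using Submodule.smul_induction_on' with
    | smul a ha z _ =>
      obtain ⟨y, hy⟩ := Submodule.Quotient.mk_surjective _ (z.val n)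
      exact ⟨a • y, Submodule.smul_mem_smul ha trivial, by
        rw [AdicCompletion.val_smul_apply, ← hy, Submodule.Quotient.mk_smul]⟩
    | add y _ z _ hy hz =>
      obtain ⟨u, hu, hu'⟩ := hy
      obtain ⟨w, hw, hw'⟩ := hz
      exact ⟨u + w, add_mem hu hw, by rw [AdicCompletion.val_add_apply, hu', hw',
        Submodule.Quotient.mk_add]⟩
  obtain ⟨y, hy, h2⟩ := h1 _ hx
  have h3 := (mem_maximalIdeal_pow_smul_top_iff p n _).1 ((Submodule.Quotient.eq _).1 h2)
  rw [Submodule.sup_smul]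
  rw [← sub_add_cancel (LocalizedModule.mkLinearMap p.asIdeal.primeCompl L x) y]
  exact add_mem (Submodule.mem_sup_right h3) (Submodule.mem_sup_left hy)

theorem mem_smul_top_localCompletion_of_not_le (q : Ideal A) (hq : ¬ q ≤ p.asIdeal)
    (t : LocalCompletion p L) : t ∈ q • (⊤ : Submodule A (LocalCompletion p L)) := by
  obtain ⟨a, ha, hap⟩ := SetLike.not_le_iff_exists.1 hq
  obtain ⟨u, hu⟩ := IsLocalization.map_units (Localization.AtPrime p.asIdeal)
    (⟨a, hap⟩ : p.asIdeal.primeCompl)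
  have : t = a • ((↑u⁻¹ : Localization.AtPrime p.asIdeal) • t) := by
    rw [← algebraMap_smul (Localization.AtPrime p.asIdeal) a, ← hu, smul_smul, Units.mul_inv,
      one_smul]
  rw [this]
  exact Submodule.smul_mem_smul ha trivial

theorem subsingleton_localCompletion (hp : p.asIdeal • (⊤ : Submodule A L) = ⊤) :
    Subsingleton (LocalCompletion p L) := by
  have h1 : IsLocalRing.maximalIdeal (Localization.AtPrime p.asIdeal) •
      (⊤ : Submodule (Localization.AtPrime p.asIdeal)
        (LocalizedModule p.asIdeal.primeCompl L)) = ⊤ := by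
    refine eq_top_iff.2 fun z _ => ?_
    obtain ⟨⟨l, s⟩, hl⟩ := IsLocalizedModule.surj p.asIdeal.primeCompl
        (LocalizedModule.mkLinearMap p.asIdeal.primeCompl L) z
    have h2 : LocalizedModule.mkLinearMap p.asIdeal.primeCompl L l ∈ p.asIdeal ^ 1 •
        (⊤ : Submodule A (LocalizedModule p.asIdeal.primeCompl L)) := by
      have : l ∈ p.asIdeal • (⊤ : Submodule A L) := by rw [hp]; trivial
      have := Submodule.mem_map_of_mem
        (f := LocalizedModule.mkLinearMap p.asIdeal.primeCompl L) this
      rw [Submodule.map_smul''] at this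
      rw [pow_one]
      exact Submodule.smul_mono le_rfl le_top this
    rw [← mem_maximalIdeal_pow_smul_top_iff, pow_one, ← hl] at h2
    obtain ⟨u, hu⟩ := IsLocalization.map_units (Localization.AtPrime p.asIdeal) s
    have h3 := Submodule.smul_mem _ (↑u⁻¹ : Localization.AtPrime p.asIdeal) h2
    change _ • ((s : A) • z) ∈ _ at h3
    rwa [← algebraMap_smul (Localization.AtPrime p.asIdeal) (s : A), ← hu, smul_smul,
      Units.inv_mul, one_smul] at h3
  have h2 : ∀ n : ℕ, IsLocalRing.maximalIdeal (Localization.AtPrime p.asIdeal) ^ n •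
      (⊤ : Submodule (Localization.AtPrime p.asIdeal)
        (LocalizedModule p.asIdeal.primeCompl L)) = ⊤ := by
    intro n
    induction n with
    | zero => simp
    | succ n ih => rw [pow_succ, Submodule.mul_smul, h1, ih]
  refine ⟨fun x y => AdicCompletion.ext fun n => ?_⟩
  have := Submodule.Quotient.subsingleton_iff.2 (h2 n)
  exact Subsingleton.elim _ _

theorem exists_sub_toLocalCompletion_mem [IsNoetherianRing A]
    (hp : ∀ s ∉ p.asIdeal, (p.asIdeal ⊔ Ideal.span {s}) • (⊤ : Submodule A L) = ⊤)
    (t : LocalCompletion p L) : ∃ l : L, t - toLocalCompletion p L l ∈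
      p.asIdeal • (⊤ : Submodule A (LocalCompletion p L)) := by
  have : IsNoetherianRing (Localization.AtPrime p.asIdeal) :=
    IsLocalization.isNoetherianRing p.asIdeal.primeCompl _ inferInstance
  obtain ⟨z, hz⟩ := Submodule.Quotient.mk_surjective _ (t.val 1)
  obtain ⟨⟨l, s⟩, hl⟩ := IsLocalizedModule.surj p.asIdeal.primeCompl
    (LocalizedModule.mkLinearMap p.asIdeal.primeCompl L) z
  have h1 : l ∈ (p.asIdeal ⊔ Ideal.span {(s : A)}) • (⊤ : Submodule A L) := by
    rw [hp s s.2]; trivial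
  rw [Submodule.sup_smul, Submodule.mem_sup] at h1
  obtain ⟨l₁, h₁, l₂, h₂, rfl⟩ := h1
  rw [Submodule.ideal_span_singleton_smul] at h₂
  obtain ⟨l₂, -, rfl⟩ := h₂
  refine ⟨l₂, ?_⟩
  suffices h : t - toLocalCompletion p L l₂ ∈
      p.asIdeal ^ 1 • (⊤ : Submodule A (LocalCompletion p L)) by
    rwa [pow_one] at h
  rw [← mem_maximalIdeal_pow_smul_top_iff,
    AdicCompletion.pow_smul_top_eq_ker_eval (IsNoetherian.noetherian _), LinearMap.mem_ker,
    map_sub, AdicCompletion.eval_apply, ← hz, sub_eq_zero]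
  refine (Submodule.Quotient.eq _).2 ?_
  have h2 : LocalizedModule.mkLinearMap p.asIdeal.primeCompl L l₁ ∈ p.asIdeal ^ 1 •
      (⊤ : Submodule A (LocalizedModule p.asIdeal.primeCompl L)) := by
    have := Submodule.mem_map_of_mem (f := LocalizedModule.mkLinearMap p.asIdeal.primeCompl L) h₁
    rw [Submodule.map_smul''] at this
    rw [pow_one]
    exact Submodule.smul_mono le_rfl le_top this
  have h4 : LocalizedModule.mkLinearMap p.asIdeal.primeCompl L l₁ =
      (s : A) • (z - LocalizedModule.mkLinearMap p.asIdeal.primeCompl L l₂) := by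
    rw [smul_sub, ← map_smul]
    refine eq_sub_of_add_eq ?_
    rw [← map_add]
    exact hl.symm
  rw [h4, ← mem_maximalIdeal_pow_smul_top_iff] at h2
  obtain ⟨u, hu⟩ := IsLocalization.map_units (Localization.AtPrime p.asIdeal) s
  have h3 := Submodule.smul_mem _ (↑u⁻¹ : Localization.AtPrime p.asIdeal) h2
  rwa [← algebraMap_smul (Localization.AtPrime p.asIdeal) (s : A), ← hu, smul_smul,
    Units.inv_mul, one_smul] at h3

end LocalCompletion

section Coresolution

variable {A : Type} [CommRing A]

theorem smul_top_eq_top_of_forall_prime [IsNoetherianRing A] {L : Type*} [AddCommGroup L]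
    [Module A L] (J : Ideal A)
    (hJ : ∀ p : PrimeSpectrum A, J ≤ p.asIdeal → p.asIdeal • (⊤ : Submodule A L) = ⊤) :
    J • (⊤ : Submodule A L) = ⊤ := by
  induction J using IsNoetherian.induction with | hgt J ih =>
  change Ideal A at J
  have hgt : ∀ J' > J, J' • (⊤ : Submodule A L) = ⊤ := fun J' hJ' =>
    ih J' hJ' fun p hp => hJ p (hJ'.le.trans hp)
  by_cases htop : J = ⊤
  · rw [htop, Submodule.top_smul]
  by_cases hprime : J.IsPrime
  · exact hJ ⟨J, hprime⟩ le_rfl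
  obtain ⟨a, ha, b, hb, hab⟩ := (Ideal.not_isPrime_iff.1 hprime).resolve_left htop
  have hlt : ∀ c ∉ J, J < J ⊔ Ideal.span {c} := fun c hc =>
    left_lt_sup.2 fun h => hc (h (Ideal.mem_span_singleton_self c))
  have hle : (J ⊔ Ideal.span {a}) * (J ⊔ Ideal.span {b}) ≤ J := by
    rw [Ideal.sup_mul, Ideal.mul_sup (Ideal.span {a}), Ideal.span_singleton_mul_span_singleton]
    refine sup_le Ideal.mul_le_left (sup_le Ideal.mul_le_right ?_)
    exact (Ideal.span_singleton_le_iff_mem J).2 hab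
  refine eq_top_iff.2 (le_trans ?_ (Submodule.smul_mono_left hle))
  rw [Submodule.mul_smul, hgt _ (hlt b hb), hgt _ (hlt a ha)]

theorem mem_smul_top_pi [IsNoetherianRing A] {X : Type*} (T : X → Type*)
    [∀ p, AddCommGroup (T p)] [∀ p, Module A (T p)] (J : Ideal A) (x : ∀ p, T p)
    (hx : ∀ p, x p ∈ J • (⊤ : Submodule A (T p))) : x ∈ J • (⊤ : Submodule A (∀ p, T p)) := by
  obtain ⟨r, g, rfl⟩ := exists_generators J
  choose y hy using fun p => (mem_span_smul_top_iff g (x p)).1 (hx p)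
  refine (mem_span_smul_top_iff g x).2 ⟨fun i p => y p i, ?_⟩
  ext p
  simpa using hy p

/-- Multiplication by every prime of coheight less than `k` is surjective on `L`. -/
def IsDivisibleBelow (A : Type) [CommRing A] (k : ℕ) (L : Type) [AddCommGroup L] [Module A L] :
    Prop :=
  ∀ p : PrimeSpectrum A, Order.coheight p < k → p.asIdeal • (⊤ : Submodule A L) = ⊤

theorem IsDivisibleBelow.subsingleton [IsNoetherianRing A] {k : ℕ} {L : Type} [AddCommGroup L]
    [Module A L] (hL : IsDivisibleBelow A (k + 1) L) (hk : ringKrullDim A ≤ k) :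
    Subsingleton L := by
  have : (⊥ : Ideal A) • (⊤ : Submodule A L) = ⊤ := by
    refine smul_top_eq_top_of_forall_prime _ fun p _ => hL p ?_
    have h := (Order.coheight_le_krullDim p).trans hk
    have h' : Order.coheight p ≤ k := by exact_mod_cast h
    refine h'.trans_lt ?_
    exact_mod_cast Nat.lt_succ_self k
  rw [Submodule.bot_smul] at this
  exact (Submodule.subsingleton_iff A).1 (subsingleton_of_bot_eq_top this)

/-- A flat module embeds into a flat cotorsion module with flat cokernel, and the cokernel gains one
degree of divisibility. -/
theorem exists_coresolution [IsNoetherianRing A] (L : Type) [AddCommGroup L] [Module A L]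
    [Module.Flat A L] (k : ℕ) (hL : IsDivisibleBelow A k L) :
    ∃ (C L' : Type) (_ : AddCommGroup C) (_ : Module A C) (_ : AddCommGroup L') (_ : Module A L')
      (ι : L →ₗ[A] C) (π : C →ₗ[A] L'), IsCotorsion A C ∧ Module.Flat A L' ∧
      Function.Injective ι ∧ Function.Exact ι π ∧ Function.Surjective π ∧
      IsDivisibleBelow A (k + 1) L' := by
  let ι : L →ₗ[A] (∀ p : PrimeSpectrum A, LocalCompletion p L) :=
    LinearMap.pi fun p => toLocalCompletion p L
  have hflat : ∀ p : PrimeSpectrum A, Module.Flat A (LocalCompletion p L) :=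
    fun p => flat_localCompletion p L
  have hC : Module.Flat A (∀ p : PrimeSpectrum A, LocalCompletion p L) := flat_pi _
  have hpure : ∀ (J : Ideal A) (x : L), ι x ∈ J • (⊤ : Submodule A _) →
      x ∈ J • (⊤ : Submodule A L) := by
    intro J x hx
    refine mem_smul_top_of_forall_prime x J fun p n =>
      exists_smul_mem_of_toLocalCompletion_mem p J x ?_ n
    have := Submodule.mem_map_of_mem (f := LinearMap.proj p) hx
    rw [Submodule.map_smul''] at this
    exact Submodule.smul_mono le_rfl le_top this
  have hex : Function.Exact ι (LinearMap.range ι).mkQ := LinearMap.exact_map_mkQ_range ι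
  refine ⟨_, _ ⧸ LinearMap.range ι, _, _, _, _, ι, (LinearMap.range ι).mkQ,
    IsCotorsion.pi _ fun p => isCotorsion_localCompletion p L,
    flat_of_pure ι _ (Submodule.mkQ_surjective _) hex hpure, ?_, hex,
    Submodule.mkQ_surjective _, ?_⟩
  · refine (injective_iff_map_eq_zero ι).2 fun x hx => ?_
    have := hpure ⊥ x (by rw [hx]; exact zero_mem _)
    rwa [Submodule.bot_smul, Submodule.mem_bot] at this
  · intro q hq
    have habove : ∀ p : PrimeSpectrum A, q < p → p.asIdeal • (⊤ : Submodule A L) = ⊤ := by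
      intro p hp
      refine hL p ((Order.coheight_le_coe_iff (n := k)).1 ?_ p hp)
      exact ENat.lt_add_one_iff (ENat.natCast_ne_top k) |>.1 (by exact_mod_cast hq)
    refine eq_top_iff.2 fun z _ => ?_
    obtain ⟨c, rfl⟩ := Submodule.mkQ_surjective _ z
    obtain ⟨l, hl⟩ := exists_sub_toLocalCompletion_mem q (fun s hs =>
      smul_top_eq_top_of_forall_prime _ fun p hp => habove p (lt_of_le_of_ne
        (le_sup_left.trans hp) fun h => hs (h ▸ hp (Submodule.mem_sup_right
          (Ideal.mem_span_singleton_self s))))) (c q)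
    have hmem : c - ι l ∈ q.asIdeal • (⊤ : Submodule A _) := by
      refine mem_smul_top_pi _ _ _ fun p => ?_
      by_cases hqp : q.asIdeal ≤ p.asIdeal
      · rcases (show q ≤ p from hqp).eq_or_lt with rfl | hlt
        · exact hl
        · have := subsingleton_localCompletion p (habove p hlt)
          rw [Subsingleton.elim ((c - ι l) p) 0]
          exact zero_mem _
      · exact mem_smul_top_localCompletion_of_not_le p _ hqp _
    have := Submodule.mem_map_of_mem (f := (LinearMap.range ι).mkQ) hmem
    rw [Submodule.map_smul'', map_sub, show (LinearMap.range ι).mkQ (ι l) = 0 from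
      hex.apply_apply_eq_zero l, sub_zero] at this
    exact Submodule.smul_mono le_rfl le_top this

end Coresolution

section Acyclic

variable {A : Type} [CommRing A]

theorem flat_quotient_range {P : ℕ → Type} [∀ n, AddCommGroup (P n)] [∀ n, Module A (P n)]
    [∀ n, Module.Flat A (P n)] (d : ∀ n, P (n + 1) →ₗ[A] P n)
    (hd : ∀ n, Function.Exact (d (n + 1)) (d n)) (h0 : Module.Flat A (P 0 ⧸ LinearMap.range (d 0)))
    (n : ℕ) : Module.Flat A (P n ⧸ LinearMap.range (d n)) := by
  induction n with
  | zero => exact h0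
  | succ n ih =>
    have h : LinearMap.range (d (n + 1)) = LinearMap.ker (d n) := (hd n).linearMap_ker_eq.symm
    have hflat : Module.Flat A (LinearMap.range (d n)) :=
      flat_of_exact (LinearMap.range (d n)).subtype (LinearMap.range (d n)).mkQ
        Subtype.val_injective (LinearMap.exact_subtype_mkQ _) (Submodule.mkQ_surjective _)
    rw [h]
    exact Module.Flat.of_linearEquiv (d n).quotKerEquivRange

theorem IsCotorsion.exists_comp_eq {T X Y Z : Type} [AddCommGroup T] [Module A T] [AddCommGroup X]
    [Module A X] [AddCommGroup Y] [Module A Y] [AddCommGroup Z] [Module A Z]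
    [Module.Projective A Z] (hT : IsCotorsion A T) (e : X →ₗ[A] Y) (d : Y →ₗ[A] Z)
    (hd : Function.Exact e d) [Module.Flat A (Z ⧸ LinearMap.range d)] (f : Y →ₗ[A] T)
    (hf : f ∘ₗ e = 0) : ∃ g : Z →ₗ[A] T, g ∘ₗ d = f := by
  have hker : LinearMap.ker d ≤ LinearMap.ker f := by
    rw [hd.linearMap_ker_eq]
    exact LinearMap.range_le_ker_iff.2 hf
  obtain ⟨g, hg⟩ := hT _ Z _ (LinearMap.range d).subtype (LinearMap.range d).mkQ
    Subtype.val_injective (LinearMap.exact_subtype_mkQ _) (Submodule.mkQ_surjective _)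
    ((LinearMap.ker d).liftQ f hker ∘ₗ d.quotKerEquivRange.symm.toLinearMap)
  refine ⟨g, ?_⟩
  ext y
  have h := LinearMap.congr_fun hg (d.quotKerEquivRange (Submodule.Quotient.mk y))
  simpa using h

theorem exists_comp_eq_of_injective_of_exact {X L C L' : Type} [AddCommGroup X] [Module A X]
    [AddCommGroup L] [Module A L] [AddCommGroup C] [Module A C] [AddCommGroup L'] [Module A L']
    (ι : L →ₗ[A] C) (π : C →ₗ[A] L') (hι : Function.Injective ι) (hex : Function.Exact ι π)
    (g : X →ₗ[A] C) (hg : π ∘ₗ g = 0) : ∃ f : X →ₗ[A] L, ι ∘ₗ f = g := by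
  refine ⟨(LinearEquiv.ofInjective ι hι).symm.toLinearMap ∘ₗ
    g.codRestrict (LinearMap.range ι) fun x => (hex _).1 (LinearMap.congr_fun hg x), ?_⟩
  ext x
  exact congrArg Subtype.val ((LinearEquiv.ofInjective ι hι).apply_symm_apply _)

theorem exists_comp_eq_of_isDivisibleBelow [IsNoetherianRing A] {P : ℕ → Type}
    [∀ n, AddCommGroup (P n)] [∀ n, Module A (P n)] [∀ n, Module.Projective A (P n)]
    (d : ∀ n, P (n + 1) →ₗ[A] P n)
    (hd : ∀ n, Function.Exact (d (n + 1)) (d n))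
    (h0 : Module.Flat A (P 0 ⧸ LinearMap.range (d 0))) (n k : ℕ)
    (hk : ringKrullDim A ≤ ((n + k : ℕ) : WithBot ℕ∞)) (L : Type) [AddCommGroup L] [Module A L]
    [Module.Flat A L] (hL : IsDivisibleBelow A k L) (f : P (n + 1) →ₗ[A] L)
    (hf : f ∘ₗ d (n + 1) = 0) : ∃ g : P n →ₗ[A] L, g ∘ₗ d n = f := by
  induction n generalizing k L with
  | zero =>
    obtain ⟨C, L', _, _, _, _, ι, π, hC, _, hι, hex, _, hL'⟩ := exists_coresolution L k hL
    have := hL'.subsingleton (by simpa using hk)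
    obtain ⟨g, hg⟩ := hC.exists_comp_eq (d 1) (d 0) (hd 0) (ι ∘ₗ f)
      (by rw [LinearMap.comp_assoc, hf, LinearMap.comp_zero])
    obtain ⟨g', rfl⟩ := exists_comp_eq_of_injective_of_exact ι π hι hex g
      (LinearMap.ext fun _ => Subsingleton.elim _ _)
    exact ⟨g', LinearMap.ext fun x => hι (LinearMap.congr_fun hg x)⟩
  | succ n ih =>
    obtain ⟨C, L', _, _, _, _, ι, π, hC, _, hι, hex, hπ, hL'⟩ := exists_coresolution L k hL
    have := flat_quotient_range d hd h0 (n + 1)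
    obtain ⟨g, hg⟩ := hC.exists_comp_eq (d (n + 2)) (d (n + 1)) (hd (n + 1)) (ι ∘ₗ f)
      (by rw [LinearMap.comp_assoc, hf, LinearMap.comp_zero])
    obtain ⟨h, hh⟩ := ih (k + 1) (by rwa [show n + (k + 1) = n + 1 + k by omega]) L' hL' (π ∘ₗ g)
      (by rw [LinearMap.comp_assoc, hg, ← LinearMap.comp_assoc, hex.linearMap_comp_eq_zero,
        LinearMap.zero_comp])
    obtain ⟨h', rfl⟩ := Module.projective_lifting_property π h hπ
    obtain ⟨g', hg'⟩ := exists_comp_eq_of_injective_of_exact ι π hι hex (g - h' ∘ₗ d n)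
      (by rw [LinearMap.comp_sub, ← hh, LinearMap.comp_assoc, sub_self])
    refine ⟨g', LinearMap.ext fun x => hι ?_⟩
    have h1 := LinearMap.congr_fun hg' (d (n + 1) x)
    have h2 := LinearMap.congr_fun hg x
    simp only [LinearMap.comp_apply, LinearMap.sub_apply, (hd n).apply_apply_eq_zero, map_zero,
      sub_zero] at h1 h2 ⊢
    rw [h1, h2]

/-- An exact complex of projectives ending in a flat module splits beyond the Krull dimension. -/
theorem exists_comp_eq_of_ringKrullDim_le [IsNoetherianRing A] {P : ℕ → Type}
    [∀ n, AddCommGroup (P n)] [∀ n, Module A (P n)] [∀ n, Module.Projective A (P n)]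
    (d : ∀ n, P (n + 1) →ₗ[A] P n) (hd : ∀ n, Function.Exact (d (n + 1)) (d n))
    (h0 : Module.Flat A (P 0 ⧸ LinearMap.range (d 0))) (n : ℕ)
    (hn : ringKrullDim A ≤ (n : WithBot ℕ∞)) {M : Type} [AddCommGroup M] [Module A M]
    (f : P (n + 1) →ₗ[A] M) (hf : f ∘ₗ d (n + 1) = 0) : ∃ g : P n →ₗ[A] M, g ∘ₗ d n = f := by
  have := flat_quotient_range d hd h0 (n + 1)
  obtain ⟨g, hg⟩ := exists_comp_eq_of_isDivisibleBelow d hd h0 n 0 (by simpa using hn)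
    (P (n + 1) ⧸ LinearMap.range (d (n + 1))) (fun p hp => by simp at hp)
    (LinearMap.range (d (n + 1))).mkQ (LinearMap.range_mkQ_comp _)
  refine ⟨(LinearMap.range (d (n + 1))).liftQ f (LinearMap.range_le_ker_iff.2 hf) ∘ₗ g, ?_⟩
  rw [LinearMap.comp_assoc, hg, Submodule.liftQ_mkQ]

end Acyclic

section BaseChange

variable {R : Type} [CommRing R] (A : Type) [CommRing A] [Algebra R A]

theorem lTensor_exact_of_flat_quotient {X Y Z : Type} [AddCommGroup X] [Module R X]
    [AddCommGroup Y] [Module R Y] [AddCommGroup Z] [Module R Z] (e : X →ₗ[R] Y) (d : Y →ₗ[R] Z)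
    (hd : Function.Exact e d) [Module.Flat R (Z ⧸ LinearMap.range d)] :
    Function.Exact (e.lTensor A) (d.lTensor A) := by
  have h1 : Function.Exact e d.rangeRestrict := fun y => by
    rw [← hd y, ← Subtype.coe_inj]
    rfl
  have h2 := lTensor_exact A h1 d.surjective_rangeRestrict
  have h3 : Function.Injective ((LinearMap.range d).subtype.lTensor A) :=
    LinearMap.lTensor_injective_of_exact_of_flat (LinearMap.range d).mkQ
      (Submodule.mkQ_surjective _) _ Subtype.val_injective (LinearMap.exact_subtype_mkQ _) A
  have h4 : d.lTensor A = (LinearMap.range d).subtype.lTensor A ∘ₗ d.rangeRestrict.lTensor A := by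
    rw [← LinearMap.lTensor_comp]
    rfl
  intro y
  rw [h4, ← h2 y, LinearMap.comp_apply, map_eq_zero_iff _ h3]

theorem exists_comp_eq_of_ringKrullDim_le_of_isScalarTower [IsNoetherianRing A] {P : ℕ → Type}
    [∀ n, AddCommGroup (P n)] [∀ n, Module R (P n)] [∀ n, Module.Projective R (P n)]
    (d : ∀ n, P (n + 1) →ₗ[R] P n) (hd : ∀ n, Function.Exact (d (n + 1)) (d n))
    (h0 : Module.Flat R (P 0 ⧸ LinearMap.range (d 0))) (n : ℕ)
    (hn : ringKrullDim A ≤ (n : WithBot ℕ∞)) {M : Type} [AddCommGroup M] [Module R M] [Module A M]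
    [IsScalarTower R A M] (f : P (n + 1) →ₗ[R] M) (hf : f ∘ₗ d (n + 1) = 0) :
    ∃ g : P n →ₗ[R] M, g ∘ₗ d n = f := by
  have hex : ∀ n, Function.Exact ((d (n + 1)).baseChange A) ((d n).baseChange A) := fun n =>
    have := flat_quotient_range d hd h0 n
    lTensor_exact_of_flat_quotient A (d (n + 1)) (d n) (hd n)
  have hflat : Module.Flat A ((A ⊗[R] P 0) ⧸ LinearMap.range ((d 0).baseChange A)) := by
    have h1 : Function.Exact ((d 0).baseChange A) ((LinearMap.range (d 0)).mkQ.baseChange A) :=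
      lTensor_exact A (LinearMap.exact_map_mkQ_range _) (Submodule.mkQ_surjective _)
    have h2 : Function.Surjective ((LinearMap.range (d 0)).mkQ.baseChange A) :=
      LinearMap.lTensor_surjective A (Submodule.mkQ_surjective _)
    exact Module.Flat.of_linearEquiv (h1.linearEquivOfSurjective h2)
  obtain ⟨g, hg⟩ := exists_comp_eq_of_ringKrullDim_le (P := fun n => A ⊗[R] P n)
    (fun n => (d n).baseChange A) hex hflat n hn (f.liftBaseChange A) (by
      ext x
      simpa using LinearMap.congr_fun hf x)
  refine ⟨g.restrictScalars R ∘ₗ TensorProduct.mk R A (P n) 1, ?_⟩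
  ext x
  simpa using LinearMap.congr_fun hg (1 ⊗ₜ x)

end BaseChange

section Ext

variable {R : Type} [CommRing R] {F M : Type} [AddCommGroup F] [Module R F] [AddCommGroup M]
  [Module R M]

theorem isZero_Ext_of_subsingleton [Subsingleton M] (i : ℕ) :
    Limits.IsZero
      (((Ext R (ModuleCat R) i).obj (Opposite.op (ModuleCat.of R F))).obj (ModuleCat.of R M)) := by
  refine .of_iso ?_ ((projectiveResolution (ModuleCat.of R F)).isoExt i (ModuleCat.of R M))
  rw [← HomologicalComplex.exactAt_iff_isZero_homology, HomologicalComplex.exactAt_iff]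
  refine ShortComplex.exact_of_isZero_X₂ _ ?_
  rw [Limits.IsZero.iff_id_eq_zero]
  ext (x : _ ⟶ _)
  exact (ModuleCat.isZero_of_subsingleton (ModuleCat.of R M)).eq_of_tgt _ _

theorem isZero_Ext_succ_of_ringKrullDim_le [IsNoetherianRing R] [Module.Flat R F] (n : ℕ)
    (hn : ringKrullDim (R ⧸ Module.annihilator R M) ≤ (n : WithBot ℕ∞)) :
    Limits.IsZero
      (((Ext R (ModuleCat R) (n + 1)).obj (Opposite.op (ModuleCat.of R F))).obj
        (ModuleCat.of R M)) := by
  let P := projectiveResolution (ModuleCat.of R F)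
  refine .of_iso ?_ (P.isoExt (n + 1) (ModuleCat.of R M))
  rw [← HomologicalComplex.exactAt_iff_isZero_homology,
    HomologicalComplex.exactAt_iff' _ n (n + 1) (n + 2) (by simp) (by simp),
    ShortComplex.moduleCat_exact_iff]
  intro (f : P.complex.X (n + 1) ⟶ ModuleCat.of R M) (hf : P.complex.d (n + 2) (n + 1) ≫ f = 0)
  let _ : Module (R ⧸ Module.annihilator R M) M := Module.quotientAnnihilator
  have : IsScalarTower R (R ⧸ Module.annihilator R M) M :=
    (Module.isTorsionBySet_annihilator R M).isScalarTower
  have hproj : ∀ m, Module.Projective R (P.complex.X m) := fun m =>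
    (IsProjective.iff_projective _).2 (P.projective m)
  have hflat : Module.Flat R (P.complex.X 0 ⧸ LinearMap.range (P.complex.d 1 0).hom) := by
    have h1 := (ShortComplex.ShortExact.moduleCat_exact_iff_function_exact _).1 P.exact₀
    have h2 : Function.Surjective (P.π.f 0).hom :=
      (ModuleCat.epi_iff_surjective _).1 inferInstance
    have h3 : Module.Flat R (((ChainComplex.single₀ (ModuleCat R)).obj (ModuleCat.of R F)).X 0) :=
      ‹Module.Flat R F›
    exact Module.Flat.of_linearEquiv (h1.linearEquivOfSurjective h2)
  obtain ⟨g, hg⟩ := exists_comp_eq_of_ringKrullDim_le_of_isScalarTower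
    (R ⧸ Module.annihilator R M) (P := fun m => P.complex.X m)
    (fun m => (P.complex.d (m + 1) m).hom)
    (fun m => (ShortComplex.ShortExact.moduleCat_exact_iff_function_exact _).1 (P.exact_succ m))
    hflat n hn f.hom (congrArg ModuleCat.Hom.hom hf)
  exact ⟨ModuleCat.ofHom g, ModuleCat.hom_ext hg⟩

end Ext

end FlatCotorsion

/-- Let `φ : R → S` be a flat ring homomorphism of commutative noetherian rings and `M` an
`R`-module.  Then `Ext^i_R(S, M) = 0` for all `i > dim (R / Ann_R M)`.  (For `M` finitely
generated, `dim_R M = dim (R / Ann_R M)`, so this says `Ext^i_R(S, M) = 0` for `i > dim_R M`.) -/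
theorem stmt_6 (R S M : Type) [CommRing R] [CommRing S] [IsNoetherianRing R] [IsNoetherianRing S]
    [Algebra R S] [Module.Flat R S] [AddCommGroup M] [Module R M] (i : ℕ)
    (hi : ringKrullDim (R ⧸ Module.annihilator R M) < ((i : ℕ∞) : WithBot ℕ∞)) :
    Subsingleton
      (((Ext R (ModuleCat R) i).obj (Opposite.op (ModuleCat.of R S))).obj (ModuleCat.of R M)) := by
  refine ModuleCat.subsingleton_of_isZero ?_
  cases i with
  | zero =>
    have : Subsingleton (R ⧸ Module.annihilator R M) := by
      by_contra h
      rw [not_subsingleton_iff_nontrivial] at h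
      exact hi.not_ge ringKrullDim_nonneg_of_nontrivial
    have : Subsingleton M :=
      Module.annihilator_eq_top_iff.1 (Ideal.Quotient.subsingleton_iff.1 this)
    exact FlatCotorsion.isZero_Ext_of_subsingleton 0
  | succ n =>
    refine FlatCotorsion.isZero_Ext_succ_of_ringKrullDim_le n ?_
    generalize ringKrullDim (R ⧸ Module.annihilator R M) = x at hi
    induction x using WithBot.recBotCoe with
    | bot => exact bot_le
    | coe x =>
      refine WithBot.coe_le_coe.2 (ENat.lt_add_one_iff (ENat.natCast_ne_top n) |>.1 ?_)
      exact_mod_cast hi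
end

section
/- Let (R, m) be a commutative noetherian local ring with m-adic completion R̂. Then Ext^i_R(R̂/R, R̂) = 0 for all i ≥ 0, Ext^i_R(R̂, R̂) = 0 for all i ≥ 1, and the evaluation map Hom_R(R̂, R̂) → R̂, f ↦ f(1), is an isomorphism. -/
open CategoryTheory IsLocalRing

section Flat

variable {R : Type*} [CommRing R] {K F Q : Type*} [AddCommGroup K] [AddCommGroup F]
  [AddCommGroup Q] [Module R K] [Module R F] [Module R Q] {i : K →ₗ[R] F} {p : F →ₗ[R] Q}

/-- Passing to character modules preserves exactness at a surjection. -/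
lemma CharacterModule.exact_dual (hip : Function.Exact i p) (hp : Function.Surjective p) :
    Function.Exact (CharacterModule.dual p) (CharacterModule.dual i) := by
  intro c
  constructor
  · intro hc
    have hker : p.toAddMonoidHom.ker ≤ AddMonoidHom.ker c := by
      intro x hx
      obtain ⟨k, rfl⟩ := (hip x).1 hx
      exact DFunLike.congr_fun hc k
    refine ⟨p.toAddMonoidHom.liftOfSurjective hp ⟨c, hker⟩, ?_⟩
    ext x
    exact AddMonoidHom.liftOfRightInverse_comp_apply _ _ (Function.rightInverse_surjInv hp)
      ⟨c, hker⟩ x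
  · rintro ⟨d, rfl⟩
    ext x
    change d (p (i x)) = 0
    rw [hip.apply_apply_eq_zero, map_zero]

lemma CharacterModule.exists_section_dual_of_flat [Module.Flat R Q] (hip : Function.Exact i p)
    (hi : Function.Injective i) (hp : Function.Surjective p) :
    ∃ s, CharacterModule.dual i ∘ₗ s = LinearMap.id := by
  have hp' := CharacterModule.dual_injective_of_surjective p hp
  refine (((exact_dual hip hp).split_tfae hp'
    (CharacterModule.dual_surjective_of_injective i hi)).out 0 1).2 ?_
  exact (Module.Flat.iff_characterModule_baer.1 ‹_›).extension_property _ hp' LinearMap.id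

/-- The kernel of a surjection between flat modules is flat. -/
lemma Module.Flat.of_exact_of_flat_right [Module.Flat R F] [Module.Flat R Q]
    (hip : Function.Exact i p) (hi : Function.Injective i) (hp : Function.Surjective p) :
    Module.Flat R K := by
  obtain ⟨s, hs⟩ := CharacterModule.exists_section_dual_of_flat hip hi hp
  rw [Module.Flat.iff_characterModule_baer, Module.Baer.iff_surjective]
  intro I g
  obtain ⟨h, hh⟩ := Module.Baer.iff_surjective.1
    (Module.Flat.iff_characterModule_baer (R := R) (M := F).1 ‹_›) I (s ∘ₗ g)
  refine ⟨CharacterModule.dual i ∘ₗ h, ?_⟩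
  change CharacterModule.dual i ∘ₗ (LinearMap.lcomp R _ I.subtype h) = g
  rw [hh, ← LinearMap.comp_assoc, hs, LinearMap.id_comp]

/-- The quotient of a flat module by a pure submodule is flat. -/
lemma Module.Flat.of_exact_of_lTensor_injective [Module.Flat R F] (hip : Function.Exact i p)
    (hi : Function.Injective i) (hp : Function.Surjective p)
    (hpure : Function.Injective (i.lTensor (CharacterModule K))) :
    Module.Flat R Q := by
  have hp' := CharacterModule.dual_injective_of_surjective p hp
  obtain ⟨r, hr⟩ := (((CharacterModule.exact_dual hip hp).split_tfae hp'
    (CharacterModule.dual_surjective_of_injective i hi)).out 0 1).1 (by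
      obtain ⟨c, hc⟩ := CharacterModule.dual_surjective_of_injective _ hpure
        (CharacterModule.uncurry LinearMap.id)
      refine ⟨CharacterModule.curry c, ?_⟩
      ext a k
      exact DFunLike.congr_fun hc (a ⊗ₜ k))
  rw [Module.Flat.iff_characterModule_baer, Module.Baer.iff_surjective]
  intro I g
  obtain ⟨h, hh⟩ := Module.Baer.iff_surjective.1
    (Module.Flat.iff_characterModule_baer (R := R) (M := F).1 ‹_›) I (CharacterModule.dual p ∘ₗ g)
  refine ⟨r ∘ₗ h, ?_⟩
  change r ∘ₗ (LinearMap.lcomp R _ I.subtype h) = g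
  rw [hh, ← LinearMap.comp_assoc, hr, LinearMap.id_comp]

/-- If `F ⧸ K` is flat, then `K ∩ I F = I K`. -/
lemma Submodule.mem_smul_top_of_coe_mem_smul_top (K : Submodule R F) [Module.Flat R (F ⧸ K)]
    (I : Ideal R) (x : K) (hx : (x : F) ∈ I • (⊤ : Submodule R F)) :
    x ∈ I • (⊤ : Submodule R K) := by
  rw [Submodule.mem_smul_top_iff]
  have htop : (⊤ : Submodule R F) = Submodule.span R (Set.range id) := by simp
  rw [htop, Submodule.mem_ideal_smul_span_iff_exists_sum] at hx
  obtain ⟨a, haI, hax⟩ := hx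
  rw [Finsupp.sum, ← Finset.sum_coe_sort] at hax
  have hrel : ∑ j : a.support, a j • K.mkQ (j : F) = 0 := by
    rw [← Submodule.Quotient.mk_eq_zero K |>.2 x.2, ← hax]
    simp [← Submodule.mkQ_apply]
  obtain ⟨k, b, y, hy, hb⟩ := Module.Flat.isTrivialRelation_of_sum_smul_eq_zero hrel
  choose z hz using fun j => K.mkQ_surjective (y j)
  have hx : (x : F) = ∑ j : a.support, a j • ((j : F) - ∑ l, b j l • z l) := by
    have hzero : ∑ j : a.support, a j • ∑ l, b j l • z l = 0 := by
      simp_rw [Finset.smul_sum, smul_smul]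
      rw [Finset.sum_comm]
      simp_rw [← Finset.sum_smul, hb, zero_smul, Finset.sum_const_zero]
    simp_rw [smul_sub, Finset.sum_sub_distrib, hzero, sub_zero]
    exact hax.symm
  rw [hx]
  refine Submodule.sum_mem _ fun j _ => Submodule.smul_mem_smul (haI _) ?_
  rw [← Submodule.Quotient.mk_eq_zero, ← Submodule.mkQ_apply, map_sub, sub_eq_zero]
  refine (hy j).trans ?_
  simp [← hz]

end Flat

section Lift

variable {R : Type*} [CommRing R] {F V : Type*} [AddCommGroup F] [AddCommGroup V]
  [Module R F] [Module R V]

/-- A linear map from `K ≤ F` to a module killed by a maximal ideal extends to `F` as soon as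
`F ⧸ K` is flat. -/
lemma LinearMap.exists_extend_of_flat_quotient (m : Ideal R) [m.IsMaximal] (K : Submodule R F)
    [Module.Flat R (F ⧸ K)] (f : K →ₗ[R] V) (hV : ∀ a ∈ m, ∀ v : V, a • v = 0) :
    ∃ g : F →ₗ[R] V, g ∘ₗ K.subtype = f := by
  let _ : Field (R ⧸ m) := Ideal.Quotient.field m
  have hf : m • (⊤ : Submodule R K) ≤ LinearMap.ker f := by
    rw [Submodule.smul_le]
    intro a ha x _
    rw [LinearMap.mem_ker, map_smul, hV a ha]
  have hle : m • (⊤ : Submodule R K) ≤ (m • (⊤ : Submodule R F)).comap K.subtype := by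
    rw [Submodule.smul_le]
    intro a ha x _
    exact Submodule.smul_mem_smul ha trivial
  let j : (K ⧸ m • (⊤ : Submodule R K)) →ₗ[R] F ⧸ m • (⊤ : Submodule R F) :=
    Submodule.mapQ _ _ K.subtype hle
  have hj : Function.Injective j := by
    rw [injective_iff_map_eq_zero]
    intro x
    obtain ⟨x, rfl⟩ := Submodule.mkQ_surjective _ x
    intro hx
    rw [Submodule.mkQ_apply, Submodule.Quotient.mk_eq_zero]
    exact K.mem_smul_top_of_coe_mem_smul_top m x ((Submodule.Quotient.mk_eq_zero _).1 hx)
  let j' : (K ⧸ m • (⊤ : Submodule R K)) →ₗ[R ⧸ m] F ⧸ m • (⊤ : Submodule R F) :=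
    LinearMap.extendScalarsOfSurjective Ideal.Quotient.mk_surjective j
  obtain ⟨r, hr⟩ := j'.exists_leftInverse_of_injective (LinearMap.ker_eq_bot.2 hj)
  refine ⟨Submodule.liftQ _ f hf ∘ₗ r.restrictScalars R ∘ₗ Submodule.mkQ _, ?_⟩
  ext x
  exact congrArg (Submodule.liftQ _ f hf) (DFunLike.congr_fun hr (Submodule.Quotient.mk x))

open AdicCompletion in
lemma AdicCompletion.exists_extend_succ (m : Ideal R) [m.IsMaximal] [Module.Projective R F]
    (K : Submodule R F) [Module.Flat R (F ⧸ K)] (f : K →ₗ[R] AdicCompletion m R) (n : ℕ)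
    (g : F →ₗ[R] R ⧸ (m ^ n • ⊤ : Submodule R R)) (hg : g ∘ₗ K.subtype = eval m R n ∘ₗ f) :
    ∃ g' : F →ₗ[R] R ⧸ (m ^ (n + 1) • ⊤ : Submodule R R),
      transitionMap m R n.le_succ ∘ₗ g' = g ∧ g' ∘ₗ K.subtype = eval m R (n + 1) ∘ₗ f := by
  have hsurj : Function.Surjective (transitionMap m R n.le_succ) := Submodule.factor_surjective _
  obtain ⟨h, hh⟩ := Module.projective_lifting_property _ g hsurj
  let e : K →ₗ[R] LinearMap.ker (transitionMap m R n.le_succ) :=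
    LinearMap.codRestrict _ (eval m R (n + 1) ∘ₗ f - h ∘ₗ K.subtype) fun x => by
      rw [LinearMap.mem_ker, LinearMap.sub_apply, map_sub, sub_eq_zero]
      exact (transitionMap_comp_eval_apply m R n.le_succ (f x)).trans
        ((DFunLike.congr_fun hg x).symm.trans (DFunLike.congr_fun hh (x : F)).symm)
  obtain ⟨e', he'⟩ := LinearMap.exists_extend_of_flat_quotient m K e (by
    rintro a ha ⟨v, hv⟩
    obtain ⟨v, rfl⟩ := Submodule.mkQ_surjective _ v
    have hv' : v ∈ m ^ n := by
      simpa using (Submodule.Quotient.mk_eq_zero _).1 hv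
    ext
    refine (Submodule.Quotient.mk_eq_zero _).2 ?_
    simpa [pow_succ'] using Ideal.mul_mem_mul ha hv')
  refine ⟨h + Submodule.subtype _ ∘ₗ e', ?_, ?_⟩
  · rw [LinearMap.comp_add, hh, ← LinearMap.comp_assoc, LinearMap.comp_ker_subtype,
      LinearMap.zero_comp, add_zero]
  · rw [LinearMap.add_comp, LinearMap.comp_assoc, he', LinearMap.subtype_comp_codRestrict]
    abel

open AdicCompletion in
/-- A linear map from `K ≤ F` to `R̂` extends to `F` if `F` is projective and `F ⧸ K` is flat. -/
lemma AdicCompletion.exists_extend_of_flat_quotient (m : Ideal R) [m.IsMaximal]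
    [Module.Projective R F] (K : Submodule R F) [Module.Flat R (F ⧸ K)]
    (f : K →ₗ[R] AdicCompletion m R) :
    ∃ g : F →ₗ[R] AdicCompletion m R, g ∘ₗ K.subtype = f := by
  choose next hnext hnext' using AdicCompletion.exists_extend_succ m K f
  have : Subsingleton (R ⧸ (m ^ 0 • ⊤ : Submodule R R)) :=
    Submodule.Quotient.subsingleton_iff.2 (by simp)
  let g : ∀ n, {g : F →ₗ[R] R ⧸ (m ^ n • ⊤ : Submodule R R) //
      g ∘ₗ K.subtype = eval m R n ∘ₗ f} :=
    Nat.rec ⟨0, LinearMap.ext fun _ => Subsingleton.elim _ _⟩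
      fun n g => ⟨next n g.1 g.2, hnext' n g.1 g.2⟩
  have hg : ∀ {k n : ℕ} (hkn : k ≤ n), transitionMap m R hkn ∘ₗ (g n).1 = (g k).1 :=
    fun hkn => IsAdicComplete.StrictMono.factorPow_comp_eq_of_factorPow_comp_succ_eq
      strictMono_id (fun n => (g n).1) (fun {n} => hnext n (g n).1 (g n).2) hkn
  refine ⟨AdicCompletion.lift m (fun n => (g n).1) hg, ?_⟩
  ext x n
  exact DFunLike.congr_fun (g n).2 x

lemma AdicCompletion.exists_comp_eq_of_flat_quotient {P : Type*} [AddCommGroup P] [Module R P]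
    (m : Ideal R) [m.IsMaximal] [Module.Projective R F] (d : P →ₗ[R] F)
    [Module.Flat R (F ⧸ LinearMap.range d)] (f : P →ₗ[R] AdicCompletion m R)
    (hf : LinearMap.ker d ≤ LinearMap.ker f) :
    ∃ g : F →ₗ[R] AdicCompletion m R, g ∘ₗ d = f := by
  obtain ⟨g, hg⟩ := AdicCompletion.exists_extend_of_flat_quotient m (LinearMap.range d)
    (Submodule.liftQ _ f hf ∘ₗ d.quotKerEquivRange.symm.toLinearMap)
  refine ⟨g, ?_⟩
  ext1 x
  have := DFunLike.congr_fun hg (d.quotKerEquivRange (Submodule.Quotient.mk x))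
  rw [LinearMap.comp_apply, LinearMap.comp_apply, LinearEquiv.coe_coe,
    LinearEquiv.symm_apply_apply] at this
  simpa using this

end Lift

section Completion

open AdicCompletion

variable {R : Type*} [CommRing R] (I : Ideal R)

/-- An `R`-linear map `R̂ → R̂` vanishing on `R` is zero. -/
lemma AdicCompletion.eq_zero_of_comp_of_eq_zero (hI : I.FG)
    (f : AdicCompletion I R →ₗ[R] AdicCompletion I R) (hf : f ∘ₗ of I R = 0) : f = 0 := by
  refine LinearMap.ext fun x => AdicCompletion.ext fun n => ?_
  obtain ⟨r, hr⟩ := Submodule.mkQ_surjective _ (eval I R n x)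
  have hx : x - of I R r ∈ I ^ n • (⊤ : Submodule R (AdicCompletion I R)) := by
    rw [pow_smul_top_eq_ker_eval hI, LinearMap.mem_ker, map_sub, eval_of, hr, sub_self]
  have hfx : f (x - of I R r) ∈ I ^ n • (⊤ : Submodule R (AdicCompletion I R)) := by
    have := Submodule.mem_map_of_mem (f := f) hx
    rw [Submodule.map_smul''] at this
    exact Submodule.smul_mono le_rfl le_top this
  rw [pow_smul_top_eq_ker_eval hI, LinearMap.mem_ker, map_sub,
    show f (of I R r) = 0 from DFunLike.congr_fun hf r, sub_zero] at hfx
  exact hfx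

lemma AdicCompletion.bijective_apply_one (hI : I.FG) :
    Function.Bijective (fun f : AdicCompletion I R →ₗ[R] AdicCompletion I R => f 1) := by
  constructor
  · intro f g hfg
    rw [← sub_eq_zero]
    refine eq_zero_of_comp_of_eq_zero I hI _ ?_
    ext1
    exact sub_eq_zero.2 hfg
  · intro x
    exact ⟨LinearMap.mulRight R x, one_mul x⟩

instance AdicCompletion.flat_quotient_range_of [IsNoetherianRing R] [IsLocalRing R] :
    Module.Flat R (AdicCompletion (maximalIdeal R) R ⧸
      LinearMap.range (AdicCompletion.of (maximalIdeal R) R)) := by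
  have : Module.FaithfullyFlat R (AdicCompletion (maximalIdeal R) R) :=
    Module.FaithfullyFlat.of_flat_of_isLocalHom
  refine Module.Flat.of_exact_of_lTensor_injective (LinearMap.exact_map_mkQ_range _) ?_
    (Submodule.mkQ_surjective _) ?_
  · exact FaithfulSMul.algebraMap_injective R (AdicCompletion (maximalIdeal R) R)
  · rw [LinearMap.lTensor_inj_iff_rTensor_inj]
    have hmk := (Module.FaithfullyFlat.tensorProduct_mk_injective (A := R)
      (B := AdicCompletion (maximalIdeal R) R) (CharacterModule R)).comp
        (TensorProduct.lid R (CharacterModule R)).injective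
    have heq : LinearMap.rTensor (CharacterModule R) (AdicCompletion.of (maximalIdeal R) R) =
        TensorProduct.mk R (AdicCompletion (maximalIdeal R) R) (CharacterModule R) 1 ∘ₗ
          (TensorProduct.lid R (CharacterModule R)).toLinearMap := by
      refine TensorProduct.ext (LinearMap.ext_ring (LinearMap.ext fun c => ?_))
      simp
      rfl
    rw [heq]
    exact hmk

end Completion

section Ext

universe u

variable {R : Type u} [CommRing R] {M : ModuleCat.{u} R} (P : ProjectiveResolution M)

lemma CategoryTheory.ProjectiveResolution.ker_d_eq_range (n : ℕ) :
    LinearMap.ker (P.complex.d (n + 1) n).hom = LinearMap.range (P.complex.d (n + 2) (n + 1)).hom :=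
  ((ShortComplex.moduleCat_exact_iff_range_eq_ker _).1 (P.exact_succ n)).symm

/-- The cokernels of the differentials in a projective resolution of a flat module are flat. -/
lemma CategoryTheory.ProjectiveResolution.flat_quotient_range_d [Module.Flat R M] (n : ℕ) :
    Module.Flat R (P.complex.X n ⧸ LinearMap.range (P.complex.d (n + 1) n).hom) := by
  have hproj (n : ℕ) : Module.Projective R (P.complex.X n) :=
    (IsProjective.iff_projective _).2 (P.projective n)
  induction n with
  | zero =>
    have hexact := (ShortComplex.moduleCat_exact_iff_range_eq_ker _).1 P.exact₀
    have hsurj : Function.Surjective (P.π.f 0).hom :=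
      (ModuleCat.epi_iff_surjective _).1 inferInstance
    have : Module.Flat R (((ChainComplex.single₀ (ModuleCat.{u} R)).obj M).X 0) :=
      inferInstanceAs (Module.Flat R M)
    exact Module.Flat.of_linearEquiv ((Submodule.quotEquivOfEq _ _ hexact).trans
      ((P.π.f 0).hom.quotKerEquivOfSurjective hsurj))
  | succ n ih =>
    have hflat : Module.Flat R (LinearMap.range (P.complex.d (n + 1) n).hom) :=
      Module.Flat.of_exact_of_flat_right (LinearMap.exact_subtype_mkQ _)
        (Submodule.injective_subtype _) (Submodule.mkQ_surjective _)
    exact Module.Flat.of_linearEquiv ((Submodule.quotEquivOfEq _ _ (P.ker_d_eq_range n).symm).trans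
      (P.complex.d (n + 1) n).hom.quotKerEquivRange)

/-- `Ext` vanishes in degree `n + 1` once every cocycle is a coboundary. -/
lemma CategoryTheory.ProjectiveResolution.subsingleton_ext_succ (N : ModuleCat.{u} R) (n : ℕ)
    (h : ∀ f : P.complex.X (n + 1) ⟶ N, P.complex.d (n + 2) (n + 1) ≫ f = 0 →
      ∃ g : P.complex.X n ⟶ N, P.complex.d (n + 1) n ≫ g = f) :
    Subsingleton (((Ext R (ModuleCat.{u} R) (n + 1)).obj (Opposite.op M)).obj N) := by
  refine ModuleCat.subsingleton_of_isZero (Limits.IsZero.of_iso ?_ (P.isoExt (n + 1) N))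
  rw [← HomologicalComplex.exactAt_iff_isZero_homology,
    HomologicalComplex.exactAt_iff' _ n (n + 1) (n + 2) (by simp) (by simp),
    ShortComplex.moduleCat_exact_iff]
  exact h

lemma CategoryTheory.ProjectiveResolution.subsingleton_ext_zero (N : ModuleCat.{u} R)
    (h : ∀ f : P.complex.X 0 ⟶ N, P.complex.d 1 0 ≫ f = 0 → f = 0) :
    Subsingleton (((Ext R (ModuleCat.{u} R) 0).obj (Opposite.op M)).obj N) := by
  refine ModuleCat.subsingleton_of_isZero (Limits.IsZero.of_iso ?_ (P.isoExt 0 N))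
  rw [← HomologicalComplex.exactAt_iff_isZero_homology,
    HomologicalComplex.exactAt_iff' _ 0 0 1 (by simp) (by simp),
    ShortComplex.moduleCat_exact_iff]
  exact fun f hf => ⟨0, (map_zero _).trans (h f hf).symm⟩

/-- The completion at a maximal ideal is cotorsion. -/
lemma AdicCompletion.subsingleton_ext_succ_of_flat (m : Ideal R) [m.IsMaximal]
    (M : ModuleCat.{u} R) [Module.Flat R M] (n : ℕ) :
    Subsingleton (((Ext R (ModuleCat.{u} R) (n + 1)).obj (Opposite.op M)).obj
      (ModuleCat.of R (AdicCompletion m R))) := by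
  let P := projectiveResolution M
  refine P.subsingleton_ext_succ _ n fun f hf => ?_
  have := P.flat_quotient_range_d n
  have : Module.Projective R (P.complex.X n) :=
    (IsProjective.iff_projective _).2 (P.projective n)
  obtain ⟨g, hg⟩ := AdicCompletion.exists_comp_eq_of_flat_quotient m
    (P.complex.d (n + 1) n).hom f.hom (by
      rw [P.ker_d_eq_range n, LinearMap.range_le_ker_iff, ← ModuleCat.hom_comp, hf]
      rfl)
  exact ⟨ModuleCat.ofHom g, ModuleCat.hom_ext hg⟩

lemma subsingleton_ext_zero_of_subsingleton_hom (M N : ModuleCat.{u} R)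
    (h : Subsingleton (M ⟶ N)) :
    Subsingleton (((Ext R (ModuleCat.{u} R) 0).obj (Opposite.op M)).obj N) := by
  let P := projectiveResolution M
  refine P.subsingleton_ext_zero _ fun f hf => ?_
  have hdesc : P.exact₀.desc f hf = 0 := h.elim _ _
  rw [← P.exact₀.g_desc f hf, hdesc, Limits.comp_zero]

end Ext

/-- Let `(R, m)` be a commutative noetherian local ring with `m`-adic completion `R̂`.  Then
`Ext^i_R(R̂/R, R̂) = 0` for all `i ≥ 0`, `Ext^i_R(R̂, R̂) = 0` for all `i ≥ 1`, and the
evaluation map `Hom_R(R̂, R̂) → R̂`, `f ↦ f(1)`, is an isomorphism. -/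
theorem stmt_12 (R : Type) [CommRing R] [IsNoetherianRing R] [IsLocalRing R] :
    (∀ i : ℕ, Subsingleton
      (((Ext R (ModuleCat R) i).obj
          (Opposite.op (ModuleCat.of R
            (AdicCompletion (maximalIdeal R) R ⧸
              LinearMap.range (AdicCompletion.of (maximalIdeal R) R))))).obj
        (ModuleCat.of R (AdicCompletion (maximalIdeal R) R)))) ∧
    (∀ i : ℕ, 1 ≤ i → Subsingleton
      (((Ext R (ModuleCat R) i).obj
          (Opposite.op (ModuleCat.of R (AdicCompletion (maximalIdeal R) R)))).obj
        (ModuleCat.of R (AdicCompletion (maximalIdeal R) R)))) ∧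
    Function.Bijective
      (fun f : AdicCompletion (maximalIdeal R) R →ₗ[R] AdicCompletion (maximalIdeal R) R =>
        f 1) := by
  have hfg : (maximalIdeal R).FG := (maximalIdeal R).fg_of_isNoetherianRing
  refine ⟨fun i => ?_, fun i hi => ?_, AdicCompletion.bijective_apply_one _ hfg⟩
  · cases i with
    | zero =>
      refine subsingleton_ext_zero_of_subsingleton_hom _ _
        (subsingleton_of_forall_eq 0 fun f => ModuleCat.hom_ext ?_)
      refine Submodule.linearMap_qext _ ?_
      refine AdicCompletion.eq_zero_of_comp_of_eq_zero _ hfg _ ?_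
      rw [LinearMap.comp_assoc, LinearMap.range_mkQ_comp, LinearMap.comp_zero]
    | succ n => exact AdicCompletion.subsingleton_ext_succ_of_flat _ _ n
  · obtain ⟨n, rfl⟩ := Nat.exists_eq_add_of_le' hi
    exact AdicCompletion.subsingleton_ext_succ_of_flat _ _ n
end

section
/- Let φ : (R, m) → (S, mS) be a flat local homomorphism of commutative noetherian local rings inducing an isomorphism R/m → S/mS, and let M be a finitely generated R-module. If Ext^i_R(S, M) satisfies NAK for i = 1, …, dim_R(M), then Ext^i_R(S, M) = 0 for all i ≥ 1 and M admits an S-module structure compatible with its R-module structure via φ. -/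
open CategoryTheory IsLocalRing

/-- `M` admits an `S`-module structure whose restriction of scalars along the algebra map
`R → S` recovers the given `R`-module structure. -/
def HasCompatibleModuleStructure (R S M : Type) [CommRing R] [CommRing S] [Algebra R S]
    [AddCommGroup M] [Module R M] : Prop :=
  ∃ hmod : Module S M, ∀ (r : R) (m : M),
    @SMul.smul S M hmod.toDistribMulAction.toMulAction.toSMul (algebraMap R S r) m = r • m

universe u

section ShortExact

variable {R : Type u} [CommRing R] {T : ShortComplex (ModuleCat.{u} R)}

theorem subsingleton_ext_middle (hT : T.ShortExact) (X : ModuleCat.{u} R) (n : ℕ)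
    (h₁ : Subsingleton (Abelian.Ext X T.X₁ n)) (h₃ : Subsingleton (Abelian.Ext X T.X₃ n)) :
    Subsingleton (Abelian.Ext X T.X₂ n) := by
  refine subsingleton_of_forall_eq 0 fun x ↦ ?_
  obtain ⟨y, rfl⟩ := Abelian.Ext.covariant_sequence_exact₂ X hT x (Subsingleton.elim _ _)
  rw [Subsingleton.elim y 0, Abelian.Ext.zero_comp]

theorem subsingleton_ext_right (hT : T.ShortExact) (X : ModuleCat.{u} R) (n : ℕ)
    (h₂ : Subsingleton (Abelian.Ext X T.X₂ n))
    (h₁ : Subsingleton (Abelian.Ext X T.X₁ (n + 1))) :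
    Subsingleton (Abelian.Ext X T.X₃ n) := by
  refine subsingleton_of_forall_eq 0 fun x ↦ ?_
  obtain ⟨y, rfl⟩ := Abelian.Ext.covariant_sequence_exact₃ X hT x rfl (Subsingleton.elim _ _)
  rw [Subsingleton.elim y 0, Abelian.Ext.zero_comp]

/-- Dimension shifting along a short exact sequence with projective middle term. -/
theorem subsingleton_ext_succ_succ_iff_of_projective (hT : T.ShortExact)
    [Projective T.X₂] (Y : ModuleCat.{u} R) (n : ℕ) :
    Subsingleton (Abelian.Ext T.X₃ Y (n + 2)) ↔ Subsingleton (Abelian.Ext T.X₁ Y (n + 1)) := by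
  refine ⟨fun h ↦ subsingleton_of_forall_eq 0 fun x ↦ ?_,
    fun h ↦ subsingleton_of_forall_eq 0 fun x ↦ ?_⟩
  · obtain ⟨y, rfl⟩ := Abelian.Ext.contravariant_sequence_exact₁ hT Y x (add_comm 1 (n + 1))
      (Subsingleton.elim _ _)
    rw [Abelian.Ext.eq_zero_of_projective y, Abelian.Ext.comp_zero]
  · obtain ⟨y, rfl⟩ := Abelian.Ext.contravariant_sequence_exact₃ hT Y x
      (Abelian.Ext.eq_zero_of_projective _) (add_comm 1 (n + 1))
    rw [Subsingleton.elim y 0, Abelian.Ext.comp_zero]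

/-- The first `Ext` vanishes iff maps extend from a syzygy to the projective containing it. -/
theorem subsingleton_ext_one_iff_of_projective (hT : T.ShortExact) [Projective T.X₂]
    (Y : ModuleCat.{u} R) :
    Subsingleton (Abelian.Ext T.X₃ Y 1) ↔ ∀ f : T.X₁ ⟶ Y, ∃ g : T.X₂ ⟶ Y, T.f ≫ g = f := by
  refine ⟨fun h f ↦ ?_, fun h ↦ subsingleton_of_forall_eq 0 fun x ↦ ?_⟩
  · obtain ⟨y, hy⟩ := Abelian.Ext.contravariant_sequence_exact₁ hT Y (Abelian.Ext.mk₀ f)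
      (add_comm 1 0) (Subsingleton.elim _ _)
    obtain ⟨g, rfl⟩ := Abelian.Ext.homEquiv₀.symm.surjective y
    refine ⟨g, (Abelian.Ext.mk₀_bijective _ _).1 ?_⟩
    rw [← hy]
    simp
  · obtain ⟨y, rfl⟩ := Abelian.Ext.contravariant_sequence_exact₃ hT Y x
      (Abelian.Ext.eq_zero_of_projective _) (add_comm 1 0)
    obtain ⟨f, rfl⟩ := Abelian.Ext.homEquiv₀.symm.surjective y
    obtain ⟨g, rfl⟩ := h f
    simp only [Abelian.Ext.homEquiv₀_symm_apply]
    rw [← Abelian.Ext.mk₀_comp_mk₀, ← Abelian.Ext.comp_assoc_of_third_deg_zero,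
      ShortComplex.ShortExact.extClass_comp, Abelian.Ext.zero_comp]

end ShortExact

theorem Module.Flat.ker_of_surjective {R : Type*} [CommRing R] {P C : Type*} [AddCommGroup P]
    [AddCommGroup C] [Module R P] [Module R C] [Module.Flat R P] [Module.Flat R C]
    (p : P →ₗ[R] C) (hp : Function.Surjective p) : Module.Flat R (LinearMap.ker p) := by
  refine Module.Flat.iff_rTensor_injective'.mpr fun I ↦ ?_
  have h₁ := LinearMap.lTensor_injective_of_exact_of_flat p hp (LinearMap.ker p).subtype
    (LinearMap.ker p).injective_subtype (LinearMap.exact_subtype_ker_map p) I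
  have h₂ := Module.Flat.rTensor_preserves_injective_linearMap (M := P) I.subtype
    I.injective_subtype
  refine Function.Injective.of_comp (f := (LinearMap.ker p).subtype.lTensor R) ?_
  rw [← LinearMap.coe_comp, LinearMap.lTensor_comp_rTensor, ← LinearMap.rTensor_comp_lTensor]
  exact h₂.comp h₁

open TensorProduct in
theorem LinearMap.shortExact_baseChange {R : Type u} (A : Type u) [CommRing R] [CommRing A]
    [Algebra R A] {K P C : Type u} [AddCommGroup K] [AddCommGroup P] [AddCommGroup C] [Module R K]
    [Module R P] [Module R C] [Module.Flat R C] (i : K →ₗ[R] P) (p : P →ₗ[R] C)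
    (hi : Function.Injective i) (hip : Function.Exact i p) (hp : Function.Surjective p) :
    (ShortComplex.mk (ModuleCat.ofHom (i.baseChange A)) (ModuleCat.ofHom (p.baseChange A))
      (ModuleCat.hom_ext (by
        rw [ModuleCat.hom_comp, ModuleCat.hom_ofHom, ModuleCat.hom_ofHom,
          ← LinearMap.baseChange_comp, hip.linearMap_comp_eq_zero, LinearMap.baseChange_zero]
        rfl))).ShortExact := by
  refine ModuleCat.shortComplex_shortExact _ ?_ ?_ ?_
  · exact lTensor_exact A hip hp
  · exact LinearMap.lTensor_injective_of_exact_of_flat p hp i hi hip A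
  · exact LinearMap.lTensor_surjective A hp

open TensorProduct in
/-- Vanishing of `Ext` out of a flat module descends along base change. -/
theorem subsingleton_ext_of_baseChange {R A : Type u} [CommRing R] [CommRing A] [Algebra R A]
    (C N : Type u) [AddCommGroup C] [Module R C] [Module.Flat R C] [AddCommGroup N] [Module R N]
    [Module A N] [IsScalarTower R A N] (n : ℕ)
    (h : Subsingleton (Abelian.Ext (ModuleCat.of A (A ⊗[R] C)) (ModuleCat.of A N) n)) :
    Subsingleton (Abelian.Ext (ModuleCat.of R C) (ModuleCat.of R N) n) := by
  induction n generalizing C with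
  | zero =>
    have : Subsingleton (ModuleCat.of A (A ⊗[R] C) ⟶ ModuleCat.of A N) :=
      Abelian.Ext.addEquiv₀.subsingleton_congr.mp h
    refine Abelian.Ext.addEquiv₀.subsingleton_congr.mpr (subsingleton_of_forall_eq 0 fun f ↦ ?_)
    have h0 : ModuleCat.ofHom (LinearMap.liftBaseChange A f.hom) = 0 := Subsingleton.elim _ _
    ext c
    simpa using congr($(h0).hom (1 ⊗ₜ c))
  | succ n ih =>
    let p : (C →₀ R) →ₗ[R] C := Finsupp.linearCombination R id
    have hp : Function.Surjective p := Finsupp.linearCombination_id_surjective R C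
    have : Module.Flat R (LinearMap.ker p) := Module.Flat.ker_of_surjective p hp
    have hR : p.shortComplexKer.ShortExact := LinearMap.shortExact_shortComplexKer hp
    have : Projective p.shortComplexKer.X₂ :=
      (IsProjective.iff_projective (C →₀ R)).mp inferInstance
    have hT := LinearMap.shortExact_baseChange A (K := LinearMap.ker p) (P := C →₀ R)
      (LinearMap.ker p).subtype p
      (LinearMap.ker p).injective_subtype (LinearMap.exact_subtype_ker_map p) hp
    have : Projective (ModuleCat.of A (A ⊗[R] (C →₀ R))) :=
      (IsProjective.iff_projective (A ⊗[R] (C →₀ R))).mp inferInstance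
    cases n with
    | zero =>
      refine (subsingleton_ext_one_iff_of_projective hR _).mpr fun f ↦ ?_
      obtain ⟨g, hg⟩ := (subsingleton_ext_one_iff_of_projective hT _).mp h
        (ModuleCat.ofHom (LinearMap.liftBaseChange A f.hom))
      refine ⟨ModuleCat.ofHom (g.hom.restrictScalars R ∘ₗ TensorProduct.mk R A (C →₀ R) 1), ?_⟩
      ext c
      simpa using congr($(hg).hom (1 ⊗ₜ c))
    | succ n =>
      exact (subsingleton_ext_succ_succ_iff_of_projective hR _ n).mpr
        (ih (LinearMap.ker p) ((subsingleton_ext_succ_succ_iff_of_projective hT _ n).mp h))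

theorem Module.Flat.sSup_of_directedOn {R V : Type*} [CommRing R] [AddCommGroup V] [Module R V]
    {c : Set (Submodule R V)} (hne : c.Nonempty) (hdir : DirectedOn (· ≤ ·) c)
    (h : ∀ D ∈ c, Module.Flat R D) : Module.Flat R (sSup c : Submodule R V) := by
  refine Module.Flat.of_forall_isTrivialRelation fun {l f x} hx ↦ ?_
  obtain ⟨D, hD, hxD⟩ : ∃ D ∈ c, ∀ i, (x i : V) ∈ D := by
    have hmem i := (Submodule.mem_sSup_of_directed hne hdir).mp (x i).2
    choose E hE hxE using hmem
    have := hne.to_subtype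
    obtain ⟨D, hD⟩ := (directedOn_iff_directed.mp hdir).finite_le
      (fun i : Fin l ↦ (⟨E i, hE i⟩ : c))
    exact ⟨D.1, D.2, fun i ↦ hD i (hxE i)⟩
  have := h D hD
  obtain ⟨k, a, y, hy, ha⟩ := Module.Flat.isTrivialRelation_of_sum_smul_eq_zero
    (f := f) (x := fun i ↦ (⟨x i, hxD i⟩ : D)) (by
      apply_fun Submodule.subtype _ at hx
      apply Subtype.ext
      simpa using hx)
  refine ⟨k, a, fun j ↦ ⟨y j, le_sSup hD (y j).2⟩, fun i ↦ Subtype.ext ?_, ha⟩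
  simpa using congr(($(hy i) : V))

/-- Over a domain with fraction field `K`, a map defined on a flat submodule of a `K`-vector space
extends to the whole space as soon as all maps from flat modules to the target are divisible. -/
theorem LinearPMap.exists_extension_of_divisible {R K V M : Type u} [CommRing R] [IsDomain R]
    [Field K] [Algebra R K] [IsFractionRing R K] [AddCommGroup V] [Module R V] [Module K V]
    [IsScalarTower R K V] [AddCommGroup M] [Module R M]
    (hM : ∀ (C : Type u) [AddCommGroup C] [Module R C] [Module.Flat R C] (s : R), s ≠ 0 →
      ∀ f : C →ₗ[R] M, ∃ g : C →ₗ[R] M, f = s • g)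
    (f : V →ₗ.[R] M) (hf : Module.Flat R f.domain) :
    ∃ g : V →ₗ[R] M, ∀ x : f.domain, g x = f x := by
  obtain ⟨m, hfm, hm⟩ := zorn_le_nonempty₀ {g : V →ₗ.[R] M | Module.Flat R g.domain}
    (fun c hc hchain y hy ↦ ⟨LinearPMap.sSup c hchain.directedOn, by
      refine Module.Flat.sSup_of_directedOn (Set.Nonempty.image _ ⟨y, hy⟩)
        (directedOn_image.mpr (hchain.directedOn.mono fun _ _ h ↦ h.1)) ?_
      rintro _ ⟨g, hg, rfl⟩
      exact hc hg, fun z hz ↦ LinearPMap.le_sSup _ hz⟩) f hf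
  have hmflat : Module.Flat R m.domain := hm.prop
  have hdiv (s : R) (hs : s ≠ 0) (v : V) (hv : s • v ∈ m.domain) : v ∈ m.domain := by
    obtain ⟨g, hg⟩ := hM m.domain s hs m.toFun
    have hsK : algebraMap R K s ≠ 0 := by simpa using hs
    let D := m.domain.comap (LinearMap.lsmul R V s)
    let e : D →ₗ[R] m.domain := (LinearMap.lsmul R V s).restrict fun x hx ↦ hx
    have he : Function.Bijective e := by
      refine ⟨fun x y hxy ↦ Subtype.ext ?_, fun y ↦ ?_⟩
      · have : s • (x : V) = s • (y : V) := congr(($hxy : V))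
        rw [← algebraMap_smul K, ← algebraMap_smul K s (y : V)] at this
        exact smul_right_injective V hsK this
      · have : s • ((algebraMap R K s)⁻¹ • (y : V)) = y := by
          rw [← algebraMap_smul K s, smul_inv_smul₀ hsK]
        exact ⟨⟨(algebraMap R K s)⁻¹ • (y : V), by simp [D, this]⟩, Subtype.ext this⟩
    have hD : Module.Flat R D := Module.Flat.of_linearEquiv (LinearEquiv.ofBijective e he)
    have hle : m ≤ ⟨D, g ∘ₗ e⟩ := by
      refine ⟨fun x hx ↦ m.domain.smul_mem s hx, fun x y hxy ↦ ?_⟩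
      have hey : e y = s • x := Subtype.ext congr(s • $hxy.symm)
      change m.toFun x = g (e y)
      rw [hey, hg]
      exact (g.map_smul s x).symm
    exact (hm.le_of_ge hD hle).1 hv
  let W : Submodule K V :=
    { m.domain with
      smul_mem' := fun k v hv ↦ by
        obtain ⟨a, b, hb, rfl⟩ := IsFractionRing.div_surjective (A := R) k
        refine hdiv b (nonZeroDivisors.ne_zero hb) _ ?_
        have : algebraMap R K b ≠ 0 := by simpa using nonZeroDivisors.ne_zero hb
        rw [← algebraMap_smul K b, smul_smul, mul_div_cancel₀ _ this, algebraMap_smul]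
        exact m.domain.smul_mem a hv }
  obtain ⟨π, hπ⟩ := W.subtype.exists_leftInverse_of_injective W.ker_subtype
  let ι : W →ₗ[R] m.domain :=
    { toFun x := ⟨x.1, x.2⟩
      map_add' _ _ := rfl
      map_smul' _ _ := rfl }
  refine ⟨m.toFun ∘ₗ ι ∘ₗ π.restrictScalars R, fun x ↦ ?_⟩
  have hx : π x = ⟨x, hfm.1 x.2⟩ := LinearMap.congr_fun hπ (⟨x, hfm.1 x.2⟩ : W)
  simp only [LinearMap.comp_apply, LinearMap.coe_restrictScalars, hx]
  exact (hfm.2 (y := ⟨x, hfm.1 x.2⟩) rfl).symm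

/-- `Ext^i(C, M)` is divisible by all nonzero scalars for every flat module `C`. -/
def FlatExtDivisible {R : Type u} [CommRing R] (M : ModuleCat.{u} R) (i : ℕ) : Prop :=
  ∀ (C : Type u) [AddCommGroup C] [Module R C] [Module.Flat R C] (s : R), s ≠ 0 →
    ∀ e : Abelian.Ext (ModuleCat.of R C) M i, ∃ g : Abelian.Ext (ModuleCat.of R C) M i, e = s • g

section

variable {R : Type u} [CommRing R] [IsDomain R]

theorem FlatExtDivisible.of_injective (I : ModuleCat.{u} R) [Injective I] (i : ℕ) :
    FlatExtDivisible I i := by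
  intro C _ _ _ s hs e
  cases i with
  | succ i => exact ⟨0, by rw [Abelian.Ext.eq_zero_of_injective e, smul_zero]⟩
  | zero =>
    obtain ⟨f, rfl⟩ := (Abelian.Ext.mk₀_bijective _ _).2 e
    have : Mono (s • 𝟙 (ModuleCat.of R C)) := by
      rw [ModuleCat.mono_iff_injective]
      exact Module.Flat.isSMulRegular_of_nonZeroDivisors (mem_nonZeroDivisors_of_ne_zero hs)
    refine ⟨Abelian.Ext.mk₀ (Injective.factorThru f (s • 𝟙 (ModuleCat.of R C))), ?_⟩
    rw [← Abelian.Ext.mk₀_smul]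
    congr 1
    have hf := Injective.comp_factorThru f (s • 𝟙 (ModuleCat.of R C))
    rw [Linear.smul_comp, Category.id_comp] at hf
    exact hf.symm

theorem FlatExtDivisible.subsingleton_one {M : ModuleCat.{u} R} (hM : FlatExtDivisible M 0)
    (C : Type u) [AddCommGroup C] [Module R C] [Module.Flat R C] :
    Subsingleton (Abelian.Ext (ModuleCat.of R C) M 1) := by
  have hM' (C : Type u) [AddCommGroup C] [Module R C] [Module.Flat R C] (s : R) (hs : s ≠ 0)
      (f : C →ₗ[R] M) : ∃ g : C →ₗ[R] M, f = s • g := by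
    obtain ⟨g, hg⟩ := hM C s hs (Abelian.Ext.mk₀ (ModuleCat.ofHom f))
    obtain ⟨g, rfl⟩ := (Abelian.Ext.mk₀_bijective _ _).2 g
    rw [← Abelian.Ext.mk₀_smul] at hg
    exact ⟨g.hom, congr($((Abelian.Ext.mk₀_bijective _ _).1 hg).hom)⟩
  let p : (C →₀ R) →ₗ[R] C := Finsupp.linearCombination R id
  have hp : Function.Surjective p := Finsupp.linearCombination_id_surjective R C
  have hker : Module.Flat R (LinearMap.ker p) := Module.Flat.ker_of_surjective p hp
  have hR : p.shortComplexKer.ShortExact := LinearMap.shortExact_shortComplexKer hp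
  have : Projective p.shortComplexKer.X₂ :=
    (IsProjective.iff_projective (C →₀ R)).mp inferInstance
  refine (subsingleton_ext_one_iff_of_projective hR _).mpr fun f ↦ ?_
  let K := FractionRing R
  let j : (C →₀ R) →ₗ[R] (C →₀ K) := Finsupp.mapRange.linearMap (Algebra.linearMap R K)
  have hj : Function.Injective j :=
    Finsupp.mapRange_injective _ (map_zero _) (IsFractionRing.injective R K)
  let e := Submodule.equivMapOfInjective j hj (LinearMap.ker p)
  have : Module.Flat R ((LinearMap.ker p).map j) := Module.Flat.of_linearEquiv e.symm
  obtain ⟨g, hg⟩ := LinearPMap.exists_extension_of_divisible (K := K) hM'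
    (⟨(LinearMap.ker p).map j, f.hom ∘ₗ e.symm.toLinearMap⟩ : (C →₀ K) →ₗ.[R] M) this
  refine ⟨ModuleCat.ofHom (g ∘ₗ j), ModuleCat.hom_ext (LinearMap.ext fun x ↦ ?_)⟩
  refine (hg (e x)).trans ?_
  exact congr(f.hom $(e.symm_apply_apply x))

theorem FlatExtDivisible.subsingleton_succ {M : ModuleCat.{u} R} {i : ℕ}
    (hM : FlatExtDivisible M i) (C : Type u) [AddCommGroup C] [Module R C] [Module.Flat R C] :
    Subsingleton (Abelian.Ext (ModuleCat.of R C) M (i + 1)) := by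
  induction i generalizing M with
  | zero => exact hM.subsingleton_one C
  | succ i ih =>
    let T := ShortComplex.mk (Injective.ι M) (Limits.cokernel.π (Injective.ι M)) (by simp)
    have hT : T.ShortExact := { exact := ShortComplex.exact_cokernel _ }
    have hI : Injective T.X₂ := inferInstanceAs (Injective (Injective.under M))
    have hT₃ : FlatExtDivisible T.X₃ i := by
      intro D _ _ _ s hs e
      obtain ⟨g, hg⟩ := hM D s hs (e.comp hT.extClass rfl)
      obtain ⟨g, rfl⟩ := Abelian.Ext.covariant_sequence_exact₁ _ hT g
        (Abelian.Ext.eq_zero_of_injective _) rfl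
      obtain ⟨y, hy⟩ := Abelian.Ext.covariant_sequence_exact₃ _ hT (e - s • g) rfl (by
        rw [sub_eq_add_neg, Abelian.Ext.add_comp, Abelian.Ext.neg_comp, Abelian.Ext.smul_comp,
          hg, add_neg_cancel])
      obtain ⟨z, rfl⟩ := FlatExtDivisible.of_injective T.X₂ i D s hs y
      refine ⟨z.comp (Abelian.Ext.mk₀ T.g) (add_zero i) + g, ?_⟩
      rw [smul_add, ← Abelian.Ext.smul_comp, hy, sub_add_cancel]
    have := ih hT₃
    refine subsingleton_of_forall_eq 0 fun x ↦ ?_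
    obtain ⟨y, rfl⟩ := Abelian.Ext.covariant_sequence_exact₁ (S := T) _ hT x
      (Abelian.Ext.eq_zero_of_injective _) rfl
    rw [Subsingleton.elim y 0, Abelian.Ext.zero_comp]

end

theorem subsingleton_ext_of_iso {R : Type u} [CommRing R] {X Y Y' : ModuleCat.{u} R} (e : Y ≅ Y')
    (n : ℕ) (h : Subsingleton (Abelian.Ext X Y n)) : Subsingleton (Abelian.Ext X Y' n) := by
  refine subsingleton_of_forall_eq 0 fun x ↦ ?_
  rw [← Abelian.Ext.comp_mk₀_id x, ← e.inv_hom_id, ← Abelian.Ext.mk₀_comp_mk₀,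
    ← Abelian.Ext.comp_assoc_of_third_deg_zero,
    Subsingleton.elim (x.comp (Abelian.Ext.mk₀ e.inv) (add_zero n)) 0, Abelian.Ext.zero_comp]

theorem subsingleton_ext_of_isZero {R : Type u} [CommRing R] {X Y : ModuleCat.{u} R}
    (h : Limits.IsZero Y) (n : ℕ) : Subsingleton (Abelian.Ext X Y n) := by
  refine subsingleton_of_forall_eq 0 fun x ↦ ?_
  rw [← Abelian.Ext.comp_mk₀_id x, h.eq_of_src (𝟙 Y) 0, Abelian.Ext.mk₀_zero,
    Abelian.Ext.comp_zero]

/-- Dévissage: vanishing of `Ext` on finite modules may be checked on the quotients by primes. -/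
theorem subsingleton_ext_of_forall_quotient_prime {R : Type u} [CommRing R] [IsNoetherianRing R]
    (X : ModuleCat.{u} R) (i : ℕ)
    (h : ∀ p : PrimeSpectrum R, Subsingleton (Abelian.Ext X (ModuleCat.of R (R ⧸ p.1)) i))
    (M : Type u) [AddCommGroup M] [Module R M] [hM : Module.Finite R M] :
    Subsingleton (Abelian.Ext X (ModuleCat.of R M) i) := by
  induction hM using IsNoetherianRing.induction_on_isQuotientEquivQuotientPrime R with
  | subsingleton N => exact subsingleton_ext_of_isZero (ModuleCat.isZero_of_subsingleton _) i
  | quotient N p e => exact subsingleton_ext_of_iso e.symm.toModuleIso i (h p)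
  | exact N₁ N₂ N₃ f g hf hg hfg h₁ h₃ =>
    exact subsingleton_ext_middle (ModuleCat.shortComplex_shortExact
      (ModuleCat.shortComplexOfCompEqZero f g hfg.linearMap_comp_eq_zero) hfg hf hg) X i h₁ h₃

theorem exists_eq_smul_ext_of_isSMulRegular {R : Type u} [CommRing R] {X M : ModuleCat.{u} R}
    {s : R} (hs : IsSMulRegular M s) (i : ℕ)
    (h : Subsingleton (Abelian.Ext X (ModuleCat.of R (QuotSMulTop s M)) i))
    (e : Abelian.Ext X M i) : ∃ g : Abelian.Ext X M i, e = s • g := by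
  obtain ⟨g, hg⟩ := Abelian.Ext.covariant_sequence_exact₂ X hs.smulShortComplex_shortExact e
    (@Subsingleton.elim _ h _ _)
  exact ⟨g, hg.symm.trans (Abelian.Ext.smul_eq_comp_mk₀ (Y := M) g s).symm⟩

/-- `Ext` groups from a flat module to a finite module `M` over a noetherian ring vanish above the
dimension of `M`. -/
theorem subsingleton_ext_of_ringKrullDim_quotient_lt (n : ℕ) {R : Type u} [CommRing R]
    [IsNoetherianRing R] (I : Ideal R) (hdim : ringKrullDim (R ⧸ I) < n)
    (C M : Type u) [AddCommGroup C] [Module R C] [Module.Flat R C] [AddCommGroup M] [Module R M]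
    [Module.Finite R M] (hI : I ≤ Module.annihilator R M) (i : ℕ) (hi : n ≤ i) :
    Subsingleton (Abelian.Ext (ModuleCat.of R C) (ModuleCat.of R M) i) := by
  induction n generalizing R C M i with
  | zero =>
    have h : Subsingleton (R ⧸ I) := by
      by_contra h
      rw [not_subsingleton_iff_nontrivial] at h
      exact absurd (hdim.trans_le (by simpa using ringKrullDim_nonneg_of_nontrivial)) (lt_irrefl _)
    rw [Ideal.Quotient.subsingleton_iff] at h
    rw [h, top_le_iff, Module.annihilator_eq_top_iff] at hI
    exact subsingleton_ext_of_isZero (ModuleCat.isZero_of_subsingleton _) i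
  | succ n ih =>
    let _ : Module (R ⧸ I) M := Module.IsTorsionBySet.module
      ((Module.isTorsionBySet_iff_subset_annihilator R M).mpr hI)
    have : IsScalarTower R (R ⧸ I) M := Module.IsTorsionBySet.isScalarTower _
    have : Module.Finite (R ⧸ I) M := Module.Finite.of_restrictScalars_finite R _ _
    refine subsingleton_ext_of_baseChange (A := R ⧸ I) C M i ?_
    refine subsingleton_ext_of_forall_quotient_prime _ i (fun p ↦ ?_) M
    have := p.2
    refine subsingleton_ext_of_baseChange (A := (R ⧸ I) ⧸ p.1) _ ((R ⧸ I) ⧸ p.1) i ?_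
    obtain ⟨i, rfl⟩ : ∃ j, i = j + 1 := ⟨i - 1, by omega⟩
    refine FlatExtDivisible.subsingleton_succ (fun D _ _ _ s hs ↦ ?_) _
    refine exists_eq_smul_ext_of_isSMulRegular (M := ModuleCat.of _ ((R ⧸ I) ⧸ p.1))
      (IsRegular.of_ne_zero hs).left.isSMulRegular i ?_
    refine ih (Ideal.span {s}) ?_ D (QuotSMulTop s ((R ⧸ I) ⧸ p.1)) ?_ i (by omega)
    · have h₁ := ringKrullDim_quotient_succ_le_of_nonZeroDivisor (mem_nonZeroDivisors_of_ne_zero hs)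
      have h₂ := (h₁.trans (ringKrullDim_quotient_le p.1)).trans_lt hdim
      rw [Nat.cast_succ] at h₂
      exact lt_of_add_lt_add_right h₂
    · rw [Ideal.span_singleton_le_iff_mem, Module.mem_annihilator]
      rintro ⟨x⟩
      exact (Submodule.Quotient.mk_eq_zero _).mpr (Submodule.smul_mem_pointwise_smul x s ⊤ trivial)

open scoped Pointwise in
/-- Noetherian induction on finite modules over a noetherian local ring: the inductive step divides
out either a copy of the residue field or a regular element of the maximal ideal. -/
@[elab_as_elim]
theorem IsLocalRing.induction_on_finite_module {R : Type u} [CommRing R] [IsNoetherianRing R]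
    [IsLocalRing R]
    {motive : (M : Type u) → [AddCommGroup M] → [Module R M] → [Module.Finite R M] → Prop}
    (subsingleton : ∀ (M : Type u) [AddCommGroup M] [Module R M] [Module.Finite R M]
      [Subsingleton M], motive M)
    (residue : ∀ (M : Type u) [AddCommGroup M] [Module R M] [Module.Finite R M]
      (f : (R ⧸ maximalIdeal R) →ₗ[R] M), Function.Injective f →
      motive (M ⧸ LinearMap.range f) → motive M)
    (regular : ∀ (M : Type u) [AddCommGroup M] [Module R M] [Module.Finite R M] (x : R),
      x ∈ maximalIdeal R → IsSMulRegular M x → motive (QuotSMulTop x M) → motive M)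
    ⦃M : Type u⦄ [AddCommGroup M] [Module R M] (_ : Module.Finite R M) : motive M := by
  suffices H : ∀ (N : Submodule R M) (M' : Type u) [AddCommGroup M'] [Module R M']
      [Module.Finite R M'] (q : M →ₗ[R] M'), Function.Surjective q → LinearMap.ker q = N →
      motive M' from H ⊥ M LinearMap.id Function.surjective_id LinearMap.ker_id
  intro N
  induction N using WellFoundedGT.induction with
  | ind N ih =>
  intro M' _ _ _ q hq hN
  have key (L : Submodule R M') (hL : L ≠ ⊥) : motive (M' ⧸ L) := by
    refine ih (LinearMap.ker (L.mkQ ∘ₗ q)) ?_ _ (L.mkQ ∘ₗ q)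
      ((Submodule.mkQ_surjective L).comp hq) rfl
    rw [LinearMap.ker_comp, Submodule.ker_mkQ, ← hN]
    refine lt_of_le_of_ne (fun x hx ↦ by simp [LinearMap.mem_ker.mp hx]) fun h ↦ hL ?_
    rw [← Submodule.map_comap_eq_of_surjective hq L, ← h]
    exact LinearMap.le_ker_iff_map.mp le_rfl
  cases subsingleton_or_nontrivial M'
  · exact subsingleton M'
  by_cases hs : Subsingleton ((R ⧸ maximalIdeal R) →ₗ[R] M')
  · obtain ⟨x, hx, hreg⟩ := IsSMulRegular.subsingleton_linearMap_iff.mp hs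
    rw [Ideal.annihilator_quotient] at hx
    refine regular M' x hx hreg (key _ fun h ↦ ?_)
    obtain ⟨y, hy⟩ := exists_ne (0 : M')
    have : x • y ∈ x • (⊤ : Submodule R M') := Submodule.smul_mem_pointwise_smul y x ⊤ trivial
    rw [h, Submodule.mem_bot] at this
    exact hy (hreg.right_eq_zero_of_smul this)
  · rw [not_subsingleton_iff_nontrivial] at hs
    obtain ⟨f, hf⟩ := exists_ne (0 : (R ⧸ maximalIdeal R) →ₗ[R] M')
    have : IsSimpleModule R (R ⧸ maximalIdeal R) :=
      (isSimpleModule_iff_quot_maximal).mpr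
        ⟨maximalIdeal R, inferInstance, ⟨LinearEquiv.refl _ _⟩⟩
    refine residue M' f (LinearMap.injective_of_ne_zero hf) (key _ fun h ↦ hf ?_)
    exact LinearMap.range_eq_bot.mp h

theorem subsingleton_ext_residue_succ {R : Type u} [CommRing R] [IsLocalRing R] (C : Type u)
    [AddCommGroup C] [Module R C] [Module.Flat R C] (j : ℕ) :
    Subsingleton
      (Abelian.Ext (ModuleCat.of R C) (ModuleCat.of R (R ⧸ maximalIdeal R)) (j + 1)) := by
  refine subsingleton_ext_of_baseChange (A := R ⧸ maximalIdeal R) C _ (j + 1) ?_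
  let _ : Field (R ⧸ maximalIdeal R) := Ideal.Quotient.field _
  have : Projective (ModuleCat.of (R ⧸ maximalIdeal R) (TensorProduct R (R ⧸ maximalIdeal R) C)) :=
    (IsProjective.iff_projective (R := R ⧸ maximalIdeal R)
      (TensorProduct R (R ⧸ maximalIdeal R) C)).mp inferInstance
  exact subsingleton_of_forall_eq 0 fun x ↦ Abelian.Ext.eq_zero_of_projective x

theorem LinearMap.shortExact_of_injective_mkQ {R K M : Type u} [CommRing R] [AddCommGroup K]
    [AddCommGroup M] [Module R K] [Module R M] (f : K →ₗ[R] M) (hf : Function.Injective f) :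
    (ModuleCat.shortComplexOfCompEqZero f (LinearMap.range f).mkQ
      (LinearMap.exact_map_mkQ_range f).linearMap_comp_eq_zero).ShortExact :=
  ModuleCat.shortComplex_shortExact _ (LinearMap.exact_map_mkQ_range f) hf
    (Submodule.mkQ_surjective _)

theorem Submodule.ideal_smul_top_eq_top_of_surjective {R E E' : Type*} [CommRing R]
    [AddCommGroup E] [AddCommGroup E'] [Module R E] [Module R E'] (I : Ideal R) (L : E →ₗ[R] E')
    (hL : Function.Surjective L) (hker : LinearMap.ker L ≤ I • ⊤)
    (hE' : I • (⊤ : Submodule R E') = ⊤) : I • (⊤ : Submodule R E) = ⊤ := by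
  rw [← sup_eq_left.mpr hker, ← Submodule.comap_map_eq, Submodule.map_smul'', Submodule.map_top,
    LinearMap.range_eq_top.mpr hL, hE', Submodule.comap_top]

/-- Over a noetherian local ring, the last nonvanishing positive `Ext` group from a flat module to
a finite module violates Nakayama's lemma. -/
theorem maximalIdeal_smul_ext_eq_top {R : Type u} [CommRing R] [IsNoetherianRing R] [IsLocalRing R]
    (C : Type u) [AddCommGroup C] [Module R C] [Module.Flat R C] (t : ℕ)
    (M : Type u) [AddCommGroup M] [Module R M] [hM : Module.Finite R M]
    (h : ∀ j, t + 1 < j → Subsingleton (Abelian.Ext (ModuleCat.of R C) (ModuleCat.of R M) j)) :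
    maximalIdeal R •
      (⊤ : Submodule R (Abelian.Ext (ModuleCat.of R C) (ModuleCat.of R M) (t + 1))) = ⊤ := by
  induction hM using IsLocalRing.induction_on_finite_module with
  | subsingleton M =>
    have := subsingleton_ext_of_isZero (X := ModuleCat.of R C)
      (ModuleCat.isZero_of_subsingleton (ModuleCat.of R M)) (t + 1)
    exact Subsingleton.elim _ _
  | residue M f hf ih =>
    have hT := LinearMap.shortExact_of_injective_mkQ f hf
    have hk := subsingleton_ext_residue_succ (R := R) C
    refine Submodule.ideal_smul_top_eq_top_of_surjective _
      ((Abelian.Ext.mk₀ (ModuleCat.ofHom (LinearMap.range f).mkQ)).postcompOfLinear R _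
        (add_zero (t + 1))) (fun x ↦ ?_) (fun x hx ↦ ?_)
      (ih fun j hj ↦ subsingleton_ext_right hT _ _ (h j hj) (hk j))
    · exact Abelian.Ext.covariant_sequence_exact₃ _ hT x rfl (@Subsingleton.elim _ (hk _) _ _)
    · obtain ⟨y, rfl⟩ := Abelian.Ext.covariant_sequence_exact₂ _ hT x hx
      rw [@Subsingleton.elim _ (hk t) y 0, Abelian.Ext.zero_comp]
      exact zero_mem _
  | regular M x hx hreg ih =>
    have hT := IsSMulRegular.smulShortComplex_shortExact (M := ModuleCat.of R M) hreg
    refine Submodule.ideal_smul_top_eq_top_of_surjective _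
      ((Abelian.Ext.mk₀ ((ModuleCat.of R M).smulShortComplex x).g).postcompOfLinear R _
        (add_zero (t + 1))) (fun y ↦ ?_) (fun y hy ↦ ?_)
      (ih fun j hj ↦ subsingleton_ext_right hT _ _ (h j hj) (h (j + 1) (by omega)))
    · exact Abelian.Ext.covariant_sequence_exact₃ _ hT y rfl
        (@Subsingleton.elim _ (h _ (Nat.lt_succ_self _)) _ _)
    · obtain ⟨z, hz⟩ := Abelian.Ext.covariant_sequence_exact₂ _ hT y hy
      have hz' : x • z = y :=
        (Abelian.Ext.smul_eq_comp_mk₀ (Y := ModuleCat.of R M) z x).trans hz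
      rw [← hz']
      exact Submodule.smul_mem_smul hx trivial

/-- The derived-functor `Ext` modules agree in positive degrees with the `Ext` groups defined
through the derived category. -/
theorem nonempty_ext_linearEquiv {R : Type u} [CommRing R] (X Y : ModuleCat.{u} R) (j : ℕ) :
    Nonempty (((Ext R (ModuleCat.{u} R) (j + 1)).obj (Opposite.op X)).obj Y ≃ₗ[R]
      Abelian.Ext X Y (j + 1)) := by
  let P := projectiveResolution X
  let K := P.complex.linearYonedaObj R Y
  let T := K.sc' j (j + 1) (j + 2)
  have e₁ : ((Ext R (ModuleCat.{u} R) (j + 1)).obj (Opposite.op X)).obj Y ≅ T.homology :=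
    P.isoExt (j + 1) Y ≪≫
      ShortComplex.homologyMapIso (K.isoSc' j (j + 1) (j + 2) (by simp) (by simp))
  have hg (f : T.X₂) : T.g.hom f = 0 ↔ P.complex.d (j + 2) (j + 1) ≫ f = 0 := Iff.rfl
  let q : LinearMap.ker T.g.hom →ₗ[R] Abelian.Ext X Y (j + 1) :=
    { toFun f := P.extMk (f.1 : P.complex.X (j + 1) ⟶ Y) (j + 2) rfl ((hg f.1).1 f.2)
      map_add' f g := (P.add_extMk _ _ _ _ _ _).symm
      map_smul' r f := by
        have h := P.extMk_comp_mk₀ (f.1 : P.complex.X (j + 1) ⟶ Y) (j + 2) rfl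
          ((hg f.1).1 f.2) (r • 𝟙 Y)
        rw [← Abelian.Ext.smul_eq_comp_mk₀] at h
        simp only [RingHom.id_apply]
        rw [h]
        congr 1 }
  have hq : Function.Surjective q := fun α ↦ by
    obtain ⟨f, hf, rfl⟩ := P.extMk_surjective α (j + 2) rfl
    exact ⟨⟨f, (hg f).2 hf⟩, rfl⟩
  have hker : LinearMap.range T.moduleCatToCycles = LinearMap.ker q := by
    ext ⟨f, hf⟩
    rw [LinearMap.mem_range, LinearMap.mem_ker]
    refine Iff.trans ?_ (P.extMk_eq_zero_iff (f : P.complex.X (j + 1) ⟶ Y) (j + 2) rfl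
      ((hg f).1 hf) j rfl).symm
    exact exists_congr fun g ↦ Subtype.ext_iff
  exact ⟨(e₁ ≪≫ T.moduleCatHomologyIso).toLinearEquiv ≪≫ₗ
    Submodule.quotEquivOfEq _ _ hker ≪≫ₗ q.quotKerEquivOfSurjective hq⟩

theorem exists_lift_of_subsingleton_ext_one {R : Type u} [CommRing R]
    {T : ShortComplex (ModuleCat.{u} R)} (hT : T.ShortExact) (X : ModuleCat.{u} R)
    (h : Subsingleton (Abelian.Ext X T.X₁ 1)) (f : X ⟶ T.X₃) : ∃ g : X ⟶ T.X₂, g ≫ T.g = f := by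
  obtain ⟨y, hy⟩ := Abelian.Ext.covariant_sequence_exact₃ X hT (Abelian.Ext.mk₀ f) rfl
    (Subsingleton.elim _ _)
  obtain ⟨g, rfl⟩ := (Abelian.Ext.mk₀_bijective _ _).2 y
  rw [Abelian.Ext.mk₀_comp_mk₀] at hy
  exact ⟨g, (Abelian.Ext.mk₀_bijective _ _).1 hy⟩

section Evaluation

variable {R : Type u} [CommRing R] [IsNoetherianRing R] [IsLocalRing R]

theorem LinearMap.eq_zero_of_apply_eq_zero_of_span_sup {C M : Type*} [AddCommGroup C] [Module R C]
    [AddCommGroup M] [Module R M] [Module.Finite R M] {c : C}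
    (hc : Submodule.span R {c} ⊔ maximalIdeal R • ⊤ = ⊤) {f : C →ₗ[R] M} (hf : f c = 0) :
    f = 0 := by
  rw [← LinearMap.range_eq_bot]
  refine Submodule.eq_bot_of_le_smul_of_le_jacobson_bot (maximalIdeal R) _
    (IsNoetherian.noetherian _) ?_ (IsLocalRing.maximalIdeal_le_jacobson _)
  conv_lhs => rw [LinearMap.range_eq_map, ← hc, Submodule.map_sup, Submodule.map_span,
    Set.image_singleton, hf, Submodule.span_zero_singleton, bot_sup_eq, Submodule.map_smul'',
    ← LinearMap.range_eq_map]

/-- If the positive `Ext` groups from a flat module `C` to a finite module `M` vanish, then maps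
`C → M` may take any prescribed value at an element `c` of `C` for which this is true of maps to
the residue field. -/
theorem exists_linearMap_apply_eq_of_subsingleton_ext (C : Type u) [AddCommGroup C] [Module R C]
    [Module.Flat R C] (c : C) (hk : ∀ a : R ⧸ maximalIdeal R,
      ∃ g : C →ₗ[R] (R ⧸ maximalIdeal R), g c = a)
    (M : Type u) [AddCommGroup M] [Module R M] [hM : Module.Finite R M]
    (h : ∀ j, Subsingleton (Abelian.Ext (ModuleCat.of R C) (ModuleCat.of R M) (j + 1))) (y : M) :
    ∃ f : C →ₗ[R] M, f c = y := by
  induction hM using IsLocalRing.induction_on_finite_module with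
  | subsingleton M => exact ⟨0, Subsingleton.elim _ _⟩
  | residue M f hf ih =>
    have hT := LinearMap.shortExact_of_injective_mkQ f hf
    have hres := subsingleton_ext_residue_succ (R := R) C
    obtain ⟨g', hg'⟩ := ih (fun j ↦ subsingleton_ext_right hT _ _ (h j) (hres (j + 1)))
      ((LinearMap.range f).mkQ y)
    obtain ⟨g, hg⟩ := exists_lift_of_subsingleton_ext_one hT _ (hres 0) (ModuleCat.ofHom g')
    have hgc : (LinearMap.range f).mkQ (g.hom c) = (LinearMap.range f).mkQ y :=
      (congr($(hg).hom c)).trans hg'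
    obtain ⟨a, ha⟩ := (Submodule.Quotient.eq _).mp hgc.symm
    obtain ⟨l, rfl⟩ := hk a
    refine ⟨g.hom + f ∘ₗ l, ?_⟩
    rw [LinearMap.add_apply, LinearMap.comp_apply, ha]
    exact add_sub_cancel _ _
  | regular M x hx hreg ih =>
    have hT := IsSMulRegular.smulShortComplex_shortExact (M := ModuleCat.of R M) hreg
    let V := LinearMap.range (LinearMap.applyₗ (R := R) (M₂ := M) c)
    suffices hV : (⊤ : Submodule R M) ≤ V from hV (Submodule.mem_top (x := y))
    refine Submodule.le_of_le_smul_of_le_jacobson_bot (I := maximalIdeal R)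
      (IsNoetherian.noetherian _) (IsLocalRing.maximalIdeal_le_jacobson _) fun y _ ↦ ?_
    obtain ⟨g', hg'⟩ := ih (fun j ↦ subsingleton_ext_right hT _ _ (h j) (h (j + 1)))
      (Submodule.Quotient.mk y)
    obtain ⟨g, hg⟩ := exists_lift_of_subsingleton_ext_one hT _ (h 0) (ModuleCat.ofHom g')
    let f : C →ₗ[R] M := g.hom
    have hgc : (Submodule.Quotient.mk (f c) : QuotSMulTop x M) = Submodule.Quotient.mk y :=
      (congr($(hg).hom c)).trans hg'
    obtain ⟨z, -, hz⟩ := (Submodule.Quotient.eq _).mp hgc.symm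
    refine Submodule.mem_sup.mpr ⟨f c, ⟨f, rfl⟩, x • z,
      Submodule.smul_mem_smul hx trivial, ?_⟩
    exact (congrArg (fun w ↦ f c + w) hz).trans (add_sub_cancel _ _)

end Evaluation

/-- If maps `S → M` are uniquely determined by their value at `1`, which may be arbitrary, then `M`
carries a compatible `S`-module structure. -/
theorem hasCompatibleModuleStructure_of_bijective (R S M : Type) [CommRing R] [CommRing S]
    [Algebra R S] [AddCommGroup M] [Module R M]
    (hinj : ∀ f : S →ₗ[R] M, f 1 = 0 → f = 0) (hsurj : ∀ y : M, ∃ f : S →ₗ[R] M, f 1 = y) :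
    HasCompatibleModuleStructure R S M := by
  choose F hF using hsurj
  have huniq (f : S →ₗ[R] M) (y : M) (h : f 1 = y) : F y = f :=
    sub_eq_zero.mp (hinj _ (by rw [LinearMap.sub_apply, hF, h, sub_self]))
  refine ⟨{ smul := fun s y ↦ F y s
            one_smul := hF
            mul_smul := fun s t y ↦ ?_
            smul_zero := fun s ↦ ?_
            smul_add := fun s x y ↦ ?_
            add_smul := fun s t y ↦ map_add (F y) s t
            zero_smul := fun y ↦ map_zero (F y) }, fun r y ↦ ?_⟩
  · change F y (s * t) = F (F y t) s
    rw [huniq (F y ∘ₗ LinearMap.mulRight R t) (F y t) (by simp)]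
    rfl
  · change F 0 s = 0
    rw [huniq 0 0 rfl, LinearMap.zero_apply]
  · change F (x + y) s = F x s + F y s
    rw [huniq (F x + F y) (x + y) (by simp [hF]), LinearMap.add_apply]
  · change F y (algebraMap R S r) = r • y
    rw [Algebra.algebraMap_eq_smul_one, map_smul, hF]

/-- Let `φ : (R, m) → (S, mS)` be a flat local homomorphism of commutative noetherian local
rings inducing an isomorphism `R/m → S/mS`, and let `M` be a finitely generated `R`-module.
If `Ext^i_R(S, M)` satisfies NAK for `i = 1, …, dim_R M` (where `dim_R M = dim (R/Ann_R M)`,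
and an `R`-module `N` satisfies NAK if `N = 0` or `N/mN ≠ 0`), then `Ext^i_R(S, M) = 0` for
all `i ≥ 1` and `M` admits an `S`-module structure compatible with its `R`-module structure
via `φ`. -/
theorem stmt_19 (R S M : Type) [CommRing R] [CommRing S] [IsNoetherianRing R] [IsNoetherianRing S]
    [IsLocalRing R] [IsLocalRing S] [Algebra R S] [Module.Flat R S]
    [IsLocalHom (algebraMap R S)]
    (hmax : (maximalIdeal R).map (algebraMap R S) = maximalIdeal S)
    (hres : Function.Bijective (ResidueField.map (algebraMap R S)))
    [AddCommGroup M] [Module R M] [Module.Finite R M]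
    (hNAK : ∀ i : ℕ, 1 ≤ i →
      ((i : ℕ∞) : WithBot ℕ∞) ≤ ringKrullDim (R ⧸ Module.annihilator R M) →
      (Subsingleton
          (((Ext R (ModuleCat R) i).obj (Opposite.op (ModuleCat.of R S))).obj
            (ModuleCat.of R M)) ∨
        (maximalIdeal R) •
            (⊤ : Submodule R
              (((Ext R (ModuleCat R) i).obj (Opposite.op (ModuleCat.of R S))).obj
                (ModuleCat.of R M))) ≠ ⊤)) :
    (∀ i : ℕ, 1 ≤ i → Subsingleton
      (((Ext R (ModuleCat R) i).obj (Opposite.op (ModuleCat.of R S))).obj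
        (ModuleCat.of R M))) ∧
    HasCompatibleModuleStructure R S M := by
  have hdim : ∃ n : ℕ, ringKrullDim (R ⧸ Module.annihilator R M) < n := by
    have hle := ringKrullDim_quotient_le (Module.annihilator R M)
    rw [← maximalIdeal_height_eq_ringKrullDim (R := R)] at hle
    obtain ⟨n, hn⟩ := ENat.ne_top_iff_exists.mp
      (Ideal.height_ne_top (Ideal.IsPrime.ne_top' (I := maximalIdeal R)))
    rw [← hn] at hle
    exact ⟨n + 1, hle.trans_lt (by exact_mod_cast n.lt_succ_self)⟩
  obtain ⟨n, hn⟩ := hdim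
  have hvan (j : ℕ) : Subsingleton
      (Abelian.Ext (ModuleCat.of R S) (ModuleCat.of R M) (j + 1)) := by
    suffices H : ∀ k j : ℕ, n ≤ j + 1 + k → Subsingleton
        (Abelian.Ext (ModuleCat.of R S) (ModuleCat.of R M) (j + 1)) from H n j (by omega)
    intro k
    induction k with
    | zero =>
      exact fun j hj ↦ subsingleton_ext_of_ringKrullDim_quotient_lt n _ hn S M le_rfl _ hj
    | succ k ih =>
      intro j hj
      by_cases hlt : ringKrullDim (R ⧸ Module.annihilator R M) < ((j + 1 : ℕ) : WithBot ℕ∞)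
      · exact subsingleton_ext_of_ringKrullDim_quotient_lt (j + 1) _ hlt S M le_rfl _ le_rfl
      · obtain ⟨e⟩ := nonempty_ext_linearEquiv (ModuleCat.of R S) (ModuleCat.of R M) j
        rcases hNAK (j + 1) (by omega) (not_lt.mp hlt) with h | h
        · exact e.symm.subsingleton
        · refine absurd (Submodule.ideal_smul_top_eq_top_of_surjective _ e.toLinearMap e.surjective
            (by simp) (maximalIdeal_smul_ext_eq_top S j M fun i hi ↦ ?_)) h
          obtain ⟨i, rfl⟩ : ∃ l, i = l + 1 := ⟨i - 1, by omega⟩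
          exact ih i (by omega)
  refine ⟨fun i hi ↦ ?_, ?_⟩
  · obtain ⟨j, rfl⟩ : ∃ l, i = l + 1 := ⟨i - 1, by omega⟩
    obtain ⟨e⟩ := nonempty_ext_linearEquiv (ModuleCat.of R S) (ModuleCat.of R M) j
    have := hvan j
    exact e.subsingleton
  · let ρ := RingEquiv.ofBijective _ hres
    have hρ (r : R) : ρ.symm (residue S (algebraMap R S r)) = residue R r := by
      rw [RingEquiv.symm_apply_eq]
      rfl
    let ψ : S →ₗ[R] (R ⧸ maximalIdeal R) :=
      { toFun s := ρ.symm (residue S s)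
        map_add' s t := by
          rw [map_add, map_add]
          rfl
        map_smul' r s := by
          rw [Algebra.smul_def, map_mul, map_mul, hρ]
          rfl }
    have hψ : ψ 1 = 1 := by
      change ρ.symm (residue S 1) = 1
      rw [map_one, map_one]
    refine hasCompatibleModuleStructure_of_bijective R S M (fun f hf ↦ ?_)
      (exists_linearMap_apply_eq_of_subsingleton_ext S 1 (fun a ↦ ?_) M hvan)
    · refine LinearMap.eq_zero_of_apply_eq_zero_of_span_sup (top_le_iff.mp fun s _ ↦ ?_) hf
      obtain ⟨r, hr⟩ := residue_surjective (ρ.symm (residue S s))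
      have hs : s - algebraMap R S r ∈ maximalIdeal S := by
        rw [← residue_eq_zero_iff, map_sub, sub_eq_zero]
        apply ρ.symm.injective
        rw [hρ, hr]
      refine Submodule.mem_sup.mpr ⟨algebraMap R S r, ?_, s - algebraMap R S r, ?_,
        add_sub_cancel _ _⟩
      · rw [Algebra.algebraMap_eq_smul_one]
        exact Submodule.smul_mem _ _ (Submodule.mem_span_singleton_self _)
      · rwa [Ideal.smul_top_eq_map, hmax]
    · obtain ⟨r, rfl⟩ := Ideal.Quotient.mk_surjective a
      refine ⟨r • ψ, ?_⟩
      rw [LinearMap.smul_apply, hψ, Algebra.smul_def, mul_one]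
      rfl
end
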